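/- Let α_1 ≤ α_2, α ≥ 0, w = (w_j)_{j∈ℕ_0} ∈ W^α_{α_1,α_2} an admissible weight sequence, and p, q, u variable exponents on ℝ^n with p ≤ u. Let a > 0 and R ∈ ℕ_0 with R > α_2. Let ψ_0, ψ_1 ∈ S(ℝ^n) satisfy D^β ψ_1(0) = 0 for all multi-indices β with 0 ≤ |β| < R, and let φ_0, φ_1 ∈ S(ℝ^n) satisfy |φ_0(x)| > 0 on {|x| ≤ kε} and |φ_1(x)| > 0 on {ε ≤ |x| ≤ 2kε} for some ε > 0 and k ∈ (1,2]. With ψ_j(x) := ψ_1(2^{−j+1}x), φ_j(x) := φ_1(2^{−j+1}x) for j ≥ 2, Ψ_j := ψ̂_j, Φ_j := φ̂_j, there is c > 0 such that for every tempered distribution f ∈ S'(ℝ^n): ‖((Ψ_j^* f)_a w_j)_j‖_{M^{u(·)}_{p(·)}(ℓ^{q(·)})} ≤ c ‖((Φ_j^* f)_a w_j)_j‖_{M^{u(·)}_{p(·)}(ℓ^{q(·)})}. -/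

import Mathlib

open MeasureTheory ENNReal Real
open scoped FourierTransform

noncomputable section

/-- Euclidean space `ℝ^n`. -/
abbrev Rn (n : ℕ) : Type := EuclideanSpace ℝ (Fin n)

variable {n : ℕ}

/-- The function `φ_t(s)` used in the semimodular of variable exponent Lebesgue spaces:
`φ_t(s) = s^t` for `t < ∞`, while `φ_∞(s) = 0` for `s ≤ 1` and `= ∞` for `s > 1`. -/
def phiVE (t : ℝ≥0∞) (s : ℝ≥0∞) : ℝ≥0∞ :=
  if t = ∞ then (if s ≤ 1 then 0 else ∞) else s ^ t.toReal

/-- The semimodular `ρ_p` of variable exponent Lebesgue spaces. -/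
def modularVE (p : Rn n → ℝ≥0∞) (g : Rn n → ℝ≥0∞) : ℝ≥0∞ :=
  ∫⁻ x, phiVE (p x) (g x)

/-- The variable exponent Lebesgue quasi-norm `‖·‖_{L^{p(·)}(ℝ^n)}`, applied to the
(pointwise) absolute value of a function, i.e. to `[0,∞]`-valued functions.
(For `p⁻ ≥ 1` this is the usual Luxemburg norm; for general `p` it agrees with the
definition via `‖f‖ = ‖|f|^t‖_{L^{p/t}}^{1/t}`.) -/
def vLpNorm (p : Rn n → ℝ≥0∞) (g : Rn n → ℝ≥0∞) : ℝ≥0∞ :=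
  sInf {lam : ℝ≥0∞ | modularVE p (fun x => g x / lam) ≤ 1}

/-- A variable exponent: a measurable function `p : ℝ^n → (0,∞]` with `p⁻ = ess inf p > 0`. -/
def IsVarExp (p : Rn n → ℝ≥0∞) : Prop :=
  Measurable p ∧ (∀ x, 0 < p x) ∧ 0 < essInf p (volume : Measure (Rn n))

/-- Local log-Hölder continuity of `g : ℝ^n → ℝ`. -/
def LocLogHolder (g : Rn n → ℝ) : Prop :=
  ∃ c > 0, ∀ x y : Rn n, |g x - g y| ≤ c / Real.log (Real.exp 1 + (dist x y)⁻¹)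

/-- Log-Hölder decay of `g` at infinity, with limit value `gInf` and constant `c`. -/
def LogDecay (g : Rn n → ℝ) (gInf c : ℝ) : Prop :=
  ∀ x : Rn n, |g x - gInf| ≤ c / Real.log (Real.exp 1 + ‖x‖)

/-- `p ∈ P^log(ℝ^n)`, with prescribed limit value `pinvInf = 1/p_∞` of `1/p` at infinity. -/
def IsPLogWith (p : Rn n → ℝ≥0∞) (pinvInf : ℝ) : Prop :=
  IsVarExp p ∧ LocLogHolder (fun x => (p x)⁻¹.toReal) ∧
    ∃ c > 0, LogDecay (fun x => (p x)⁻¹.toReal) pinvInf c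

/-- `p ∈ P^log(ℝ^n)`. -/
def IsPLog (p : Rn n → ℝ≥0∞) : Prop := ∃ pinvInf : ℝ, IsPLogWith p pinvInf

/-- The Morrey quasi-norm `‖·‖_{M^{u(·)}_{p(·)}(ℝ^n)}` of a `[0,∞]`-valued function:
`sup_{x, r>0} r^{n(1/u(x) - 1/p(x))} ‖f‖_{L^{p(·)}(B_r(x))}`. -/
def morreyNorm (p u : Rn n → ℝ≥0∞) (g : Rn n → ℝ≥0∞) : ℝ≥0∞ :=
  ⨆ (x : Rn n) (r : ℝ) (_ : 0 < r),
    ENNReal.ofReal (r ^ ((n : ℝ) * ((u x)⁻¹.toReal - (p x)⁻¹.toReal))) *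
      vLpNorm p ((Metric.ball x r).indicator g)

/-- The `ℓ^q` (quasi-)norm of a sequence in `[0,∞]`, with the usual modification for `q = ∞`. -/
def lqNorm (q : ℝ≥0∞) (a : ℕ → ℝ≥0∞) : ℝ≥0∞ :=
  if q = ∞ then ⨆ ν, a ν else (∑' ν, a ν ^ q.toReal) ^ (1 / q.toReal)

/-- The vector-valued Morrey quasi-norm `‖(f_ν)_ν‖_{M^{u(·)}_{p(·)}(ℓ^{q(·)})}`. -/
def morreySeqNorm (p u q : Rn n → ℝ≥0∞) (f : ℕ → Rn n → ℝ≥0∞) : ℝ≥0∞ :=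
  morreyNorm p u (fun x => lqNorm (q x) (fun ν => f ν x))

/-- The kernel `η_{ν,m}(x) = 2^{νn} (1 + 2^ν |x|)^{-m}`. -/
def etaK (ν : ℕ) (m : ℝ) (x : Rn n) : ℝ≥0∞ :=
  ENNReal.ofReal ((2 : ℝ) ^ (ν * n) * (1 + 2 ^ ν * ‖x‖) ^ (-m))

/-- Convolution of `[0,∞]`-valued functions. -/
def lconv (f g : Rn n → ℝ≥0∞) (x : Rn n) : ℝ≥0∞ := ∫⁻ y, f (x - y) * g y

/-- The constant `c_{p,u} = max(0, sup_x (1/p(x) - 1/u(x)) - 1/p_∞)`. -/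
def cpu (p u : Rn n → ℝ≥0∞) (pinvInf : ℝ) : ℝ :=
  max 0 ((⨆ x : Rn n, ((p x)⁻¹.toReal - (u x)⁻¹.toReal)) - pinvInf)

/-- Tempered distributions on `ℝ^n`. -/
abbrev TemperedDist (n : ℕ) : Type := SchwartzMap (Rn n) ℂ →L[ℂ] ℂ

lemma hasTemperateGrowth_reflectTranslate (y : Rn n) :
    Function.HasTemperateGrowth (fun z : Rn n => y - z) := by
  have hd : Differentiable ℝ (fun z : Rn n => y - z) :=
    (differentiable_const y).sub differentiable_id
  have hfd : fderiv ℝ (fun z : Rn n => y - z)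
      = fun _ => -(ContinuousLinearMap.id ℝ (Rn n)) := by
    funext z
    rw [fderiv_const_sub, fderiv_id']
  refine Function.HasTemperateGrowth.of_fderiv (k := 1) (C := ‖y‖ + 1) ?_ hd ?_
  · rw [hfd]; exact .const _
  · intro x
    calc ‖y - x‖ ≤ ‖y‖ + ‖x‖ := norm_sub_le _ _
      _ ≤ (‖y‖ + 1) * (1 + ‖x‖) ^ 1 := by
          have h1 := norm_nonneg x
          have h2 := norm_nonneg y
          nlinarith

/-- The map `z ↦ Ψ (y - z)`, as a Schwartz function. -/
def reflectTranslate (y : Rn n) (Ψ : SchwartzMap (Rn n) ℂ) : SchwartzMap (Rn n) ℂ :=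
  SchwartzMap.compCLMOfAntilipschitz (𝕜 := ℂ) (K := 1)
    (hasTemperateGrowth_reflectTranslate y)
    ((Isometry.of_dist_eq (fun z z' => dist_sub_left y z z')).antilipschitz) Ψ

@[simp] lemma reflectTranslate_apply (y : Rn n) (Ψ : SchwartzMap (Rn n) ℂ) (z : Rn n) :
    reflectTranslate y Ψ z = Ψ (y - z) := rfl

/-- The convolution `(Ψ ∗ f)(y) = f(Ψ(y - ·))` of a Schwartz function `Ψ` with a tempered
distribution `f`. -/
def distConv (Ψ : SchwartzMap (Rn n) ℂ) (f : TemperedDist n) (y : Rn n) : ℂ :=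
  f (reflectTranslate y Ψ)

/-- The Peetre maximal function at level `j`, with parameter `a`, of a function `F`
(to be applied with `F = Ψ_j ∗ f`):  `sup_y ‖F y‖ / (1 + |2^j (y - x)|^a)`. -/
def peetreMax (a : ℝ) (j : ℕ) (F : Rn n → ℂ) (x : Rn n) : ℝ≥0∞ :=
  ⨆ y : Rn n, (‖F y‖₊ : ℝ≥0∞) / ENNReal.ofReal (1 + ((2 : ℝ) ^ j * ‖y - x‖) ^ a)

/-- Admissible weight sequences from the class `W^α_{α₁,α₂}`, with constant `C` in
condition (i). -/
def AdmissibleWeights (al al1 al2 C : ℝ) (w : ℕ → Rn n → ℝ) : Prop :=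
  (∀ j, Measurable (w j)) ∧
  (∀ (j : ℕ) (x y : Rn n), 0 < w j x ∧ w j x ≤ C * w j y * (1 + 2 ^ j * ‖x - y‖) ^ al) ∧
  (∀ (j : ℕ) (x : Rn n), 2 ^ al1 * w j x ≤ w (j + 1) x ∧ w (j + 1) x ≤ 2 ^ al2 * w j x)

/-- An admissible pair `(φ̌, Φ̌)`, described through the generating functions `φ, Φ`. -/
def AdmissiblePair (phi Phi : SchwartzMap (Rn n) ℂ) : Prop :=
  (Function.support ⇑phi ⊆ {x : Rn n | 1 / 2 ≤ ‖x‖ ∧ ‖x‖ ≤ 2}) ∧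
  (Function.support ⇑Phi ⊆ {x : Rn n | ‖x‖ ≤ 2}) ∧
  ∃ c > 0, (∀ x : Rn n, 3 / 5 ≤ ‖x‖ → ‖x‖ ≤ 5 / 3 → c ≤ ‖phi x‖) ∧
    (∀ x : Rn n, ‖x‖ ≤ 5 / 3 → c ≤ ‖Phi x‖)

/-!
Following Peetre and Rychkov, the Tauberian conditions on `φ₀`, `φ₁` give a Calderón resolution
`1 = ∑ κ, λ_κ φ_κ` with a dyadic system `λ_κ` whose generator `λ₁` vanishes near the origin.
Multiplying by `ψ_ν` and taking Fourier transforms yields `Ψ_ν ∗ f = ∑ κ, 𝓕(ψ_ν λ_κ) ∗ (Φ_κ ∗ f)`,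
so the `ν`-th Peetre maximal function is at most the sum over `κ` of the `κ`-th ones, each with
the Peetre-weighted `L¹` norm of `𝓕(ψ_ν λ_κ)` as coefficient. For `κ ≤ ν` this norm is
`O(2 ^ (-(ν - κ) R))` because `ψ₁` vanishes to order `R` at the origin, which beats the growth
`2 ^ ((ν - κ) α₂)` of the weights; for `κ > ν` it decays faster than any power of `2 ^ (-(κ - ν))`
because `λ₁` vanishes to infinite order. What remains is a discrete convolution with
`r ^ |ν - κ|`, `r < 1`. It is bounded on `ℓ^q` uniformly in `q ≥ q₀ > 0`, hence pointwise with the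
exponent `q(x)`, and the Morrey quasi-norm is monotone.
-/

open Topology Filter
open scoped SchwartzMap LineDeriv

section Translation

variable {𝕜 E F : Type*} [RCLike 𝕜] [NormedAddCommGroup E] [NormedAddCommGroup F]
  [NormedSpace ℝ E] [NormedSpace ℝ F] [NormedSpace 𝕜 F]

lemma one_add_norm_le_mul {V : Type*} [SeminormedAddCommGroup V] (x y : V) :
    1 + ‖x‖ ≤ (1 + ‖x - y‖) * (1 + ‖y‖) := by
  have h : ‖x‖ ≤ ‖x - y‖ + ‖y‖ := norm_le_norm_sub_add x y
  nlinarith [mul_nonneg (norm_nonneg (x - y)) (norm_nonneg y)]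

lemma exists_one_add_norm_pow_mul_iteratedFDeriv_le (g : 𝓢(E, F)) (k m : ℕ) :
    ∃ S : ℝ, 0 ≤ S ∧ ∀ x, (1 + ‖x‖) ^ k * ‖iteratedFDeriv ℝ m g x‖ ≤ S :=
  ⟨_, by positivity, SchwartzMap.one_add_le_sup_seminorm_apply (𝕜 := ℝ) (m := (k, m))
    le_rfl le_rfl g⟩

lemma exists_norm_pow_mul_iteratedFDeriv_sub_le (g : 𝓢(E, F)) (k m : ℕ) :
    ∃ S : ℝ, 0 ≤ S ∧ ∀ h x : E, ‖h‖ ≤ 1 →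
      ‖x‖ ^ k * ‖iteratedFDeriv ℝ m g (x - h) - iteratedFDeriv ℝ m g x‖ ≤ S * ‖h‖ := by
  obtain ⟨S, hS, hg⟩ := exists_one_add_norm_pow_mul_iteratedFDeriv_le g k (m + 1)
  refine ⟨2 ^ k * S, by positivity, fun h x hh => ?_⟩
  have hderiv : ∀ y ∈ Metric.closedBall x 1,
      ‖fderiv ℝ (iteratedFDeriv ℝ m g) y‖ ≤ 2 ^ k * S / (1 + ‖x‖) ^ k := fun y hy => by
    rw [norm_fderiv_iteratedFDeriv, le_div_iff₀ (by positivity)]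
    have hxy : 1 + ‖x‖ ≤ 2 * (1 + ‖y‖) := by
      have : ‖x - y‖ ≤ 1 := by rwa [mem_closedBall_iff_norm'] at hy
      nlinarith [one_add_norm_le_mul x y, norm_nonneg y]
    calc ‖iteratedFDeriv ℝ (m + 1) g y‖ * (1 + ‖x‖) ^ k
        ≤ ‖iteratedFDeriv ℝ (m + 1) g y‖ * (2 * (1 + ‖y‖)) ^ k := by gcongr
      _ = 2 ^ k * ((1 + ‖y‖) ^ k * ‖iteratedFDeriv ℝ (m + 1) g y‖) := by rw [mul_pow]; ring
      _ ≤ 2 ^ k * S := by gcongr; exact hg y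
  have hmean := (convex_closedBall x 1).norm_image_sub_le_of_norm_fderiv_le (𝕜 := ℝ)
    (fun y _ => ((g.smooth ⊤).differentiable_iteratedFDeriv
      (by exact_mod_cast ENat.natCast_lt_top m)).differentiableAt)
    hderiv (Metric.mem_closedBall_self zero_le_one) (y := x - h) (by simpa using hh)
  calc ‖x‖ ^ k * ‖iteratedFDeriv ℝ m g (x - h) - iteratedFDeriv ℝ m g x‖
      ≤ (1 + ‖x‖) ^ k * (2 ^ k * S / (1 + ‖x‖) ^ k * ‖x - h - x‖) := by gcongr; linarith
    _ = 2 ^ k * S * ‖h‖ := by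
        rw [sub_sub_cancel_left, norm_neg]
        field_simp

variable (𝕜)

lemma iteratedFDeriv_compSubConstCLM (g : 𝓢(E, F)) (z : E) (m : ℕ) (x : E) :
    iteratedFDeriv ℝ m (SchwartzMap.compSubConstCLM 𝕜 z g) x = iteratedFDeriv ℝ m g (x - z) :=
  iteratedFDeriv_comp_sub m z x

variable [SMulCommClass ℝ 𝕜 F]

lemma exists_seminorm_compSubConstCLM_le (g : 𝓢(E, F)) (k m : ℕ) :
    ∃ S : ℝ, 0 ≤ S ∧ ∀ z : E,
      SchwartzMap.seminorm 𝕜 k m (SchwartzMap.compSubConstCLM 𝕜 z g) ≤ S * (1 + ‖z‖) ^ k := by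
  obtain ⟨S, hS, h⟩ := exists_one_add_norm_pow_mul_iteratedFDeriv_le g k m
  refine ⟨S, hS, fun z => SchwartzMap.seminorm_le_bound _ _ _ _ (by positivity) fun x => ?_⟩
  rw [iteratedFDeriv_compSubConstCLM]
  calc ‖x‖ ^ k * ‖iteratedFDeriv ℝ m g (x - z)‖
      ≤ ((1 + ‖x - z‖) * (1 + ‖z‖)) ^ k * ‖iteratedFDeriv ℝ m g (x - z)‖ := by
        gcongr
        linarith [one_add_norm_le_mul x z]
    _ = ((1 + ‖x - z‖) ^ k * ‖iteratedFDeriv ℝ m g (x - z)‖) * (1 + ‖z‖) ^ k := by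
        rw [mul_pow]; ring
    _ ≤ S * (1 + ‖z‖) ^ k := by gcongr; exact h _

lemma continuous_compSubConstCLM_apply (g : 𝓢(E, F)) :
    Continuous fun z : E => SchwartzMap.compSubConstCLM 𝕜 z g := by
  refine continuous_iff_continuousAt.2 fun w => ?_
  rw [ContinuousAt, (schwartz_withSeminorms 𝕜 E F).tendsto_nhds]
  rintro ⟨k, m⟩ ε hε
  obtain ⟨S, hS, h⟩ := exists_norm_pow_mul_iteratedFDeriv_sub_le
    (SchwartzMap.compSubConstCLM 𝕜 w g) k m
  have hseminorm : ∀ z, ‖z - w‖ ≤ 1 → SchwartzMap.seminorm 𝕜 k m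
      (SchwartzMap.compSubConstCLM 𝕜 z g - SchwartzMap.compSubConstCLM 𝕜 w g)
        ≤ S * ‖z - w‖ := fun z hz =>
    SchwartzMap.seminorm_le_bound _ _ _ _ (by positivity) fun x => by
      have hz' := h (z - w) x hz
      rw [← iteratedFDeriv_compSubConstCLM 𝕜, SchwartzMap.compSubConstCLM_comp,
        add_sub_cancel] at hz'
      rwa [show ⇑(_ - _ : 𝓢(E, F)) = _ - _ from rfl,
        iteratedFDeriv_sub_apply (SchwartzMap.contDiffAt _ m) (SchwartzMap.contDiffAt _ m)]
  have hlim : Tendsto (fun z => S * ‖z - w‖) (𝓝 w) (𝓝 0) := by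
    have : Continuous fun z => S * ‖z - w‖ := by fun_prop
    simpa using this.tendsto w
  filter_upwards [hlim.eventually_lt_const hε, Metric.closedBall_mem_nhds w one_pos]
    with z hzε hz1
  exact (hseminorm z (mem_closedBall_iff_norm.1 hz1)).trans_lt hzε

end Translation

section WeightedDerivatives

variable {E F : Type*} [NormedAddCommGroup E] [NormedSpace ℝ E] [NormedAddCommGroup F]
  [NormedSpace ℝ F] [NormedSpace ℂ F] [SMulCommClass ℝ ℂ F]

/-- Bounded continuous functions into a normed group. Fixing the metric of the codomain to be the
one induced by its norm lets unification find the normed structure when the codomain is a space of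
multilinear maps. -/
abbrev NormedBCF (X V : Type*) [TopologicalSpace X] [NormedAddCommGroup V] : Type _ :=
  BoundedContinuousFunction X V

/-- The weighted derivative `x ↦ ‖x‖ ^ k • D^m g x` as a bounded continuous function of `x`; its
norm is the Schwartz seminorm `p_{k,m}(g)`, so these maps embed a Schwartz space into normed
spaces, where Bochner integrals are available. -/
def weightedDeriv (k m : ℕ) : 𝓢(E, F) →L[ℂ] NormedBCF E (E [×m]→L[ℝ] F) :=
  SchwartzMap.mkCLMtoNormedSpace
    (fun g => BoundedContinuousFunction.ofNormedAddCommGroup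
      (fun x => ‖x‖ ^ k • iteratedFDeriv ℝ m g x)
      ((continuous_norm.pow k).smul ((g.smooth ⊤).continuous_iteratedFDeriv
        (by exact_mod_cast (ENat.natCast_lt_top m).le)))
      (SchwartzMap.seminorm ℂ k m g)
      (fun x => by
        simpa only [norm_smul, norm_pow, norm_norm] using SchwartzMap.le_seminorm ℂ k m g x))
    (fun f g => by
      ext1 x
      change ‖x‖ ^ k • iteratedFDeriv ℝ m (⇑f + ⇑g) x = _
      rw [iteratedFDeriv_add_apply (f.contDiffAt m) (g.contDiffAt m), smul_add]
      rfl)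
    (fun c f => by
      ext1 x
      change ‖x‖ ^ k • iteratedFDeriv ℝ m (c • ⇑f) x = _
      rw [iteratedFDeriv_const_smul_apply (f.contDiffAt m), smul_comm]
      rfl)
    ⟨{(k, m)}, 1, zero_le_one, fun f => by
      rw [one_mul, Finset.sup_singleton]
      exact BoundedContinuousFunction.norm_ofNormedAddCommGroup_le _ (apply_nonneg _ _) _⟩

lemma weightedDeriv_apply (k m : ℕ) (g : 𝓢(E, F)) (x : E) :
    weightedDeriv k m g x = ‖x‖ ^ k • iteratedFDeriv ℝ m g x := rfl

lemma norm_weightedDeriv (k m : ℕ) (g : 𝓢(E, F)) :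
    ‖weightedDeriv k m g‖ = SchwartzMap.seminorm ℂ k m g := by
  have hnorm : ∀ x, ‖weightedDeriv k m g x‖ = ‖x‖ ^ k * ‖iteratedFDeriv ℝ m g x‖ := fun x => by
    rw [weightedDeriv_apply, norm_smul, norm_pow, norm_norm]
  refine le_antisymm ((BoundedContinuousFunction.norm_le (apply_nonneg _ _)).2 fun x => ?_)
    (SchwartzMap.seminorm_le_bound _ _ _ _ (norm_nonneg _) fun x => ?_)
  · exact (hnorm x).trans_le (SchwartzMap.le_seminorm ℂ k m g x)
  · exact (hnorm x).symm.trans_le ((weightedDeriv k m g).norm_coe_le_norm x)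

lemma exists_strongDual_comp_eq {𝕜 V W : Type*} [RCLike 𝕜] [AddCommGroup V] [Module 𝕜 V]
    [NormedAddCommGroup W] [NormedSpace 𝕜 W] (L : V →ₗ[𝕜] 𝕜) (T : V →ₗ[𝕜] W) (C : ℝ)
    (hT : ∀ g, ‖L g‖ ≤ C * ‖T g‖) : ∃ Λ : StrongDual 𝕜 W, ∀ g, Λ (T g) = L g := by
  have hker : LinearMap.ker T ≤ LinearMap.ker L := fun g hg => by
    simpa [LinearMap.mem_ker.1 hg] using hT g
  let ℓ : LinearMap.range T →ₗ[𝕜] 𝕜 :=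
    ((LinearMap.ker T).liftQ L hker).comp T.quotKerEquivRange.symm.toLinearMap
  have hℓ : ∀ g, ℓ ⟨T g, g, rfl⟩ = L g := fun g => by
    have : T.quotKerEquivRange.symm ⟨T g, g, rfl⟩ = Submodule.Quotient.mk g := by
      rw [LinearEquiv.symm_apply_eq]
      rfl
    simp only [ℓ, LinearMap.comp_apply, LinearEquiv.coe_coe, this, Submodule.liftQ_apply]
  obtain ⟨Λ, hΛ, -⟩ := exists_extension_norm_eq _ (ℓ.mkContinuous C (by
    rintro ⟨_, g, rfl⟩
    exact (congrArg norm (hℓ g)).trans_le (hT g)))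
  exact ⟨Λ, fun g => (hΛ ⟨T g, g, rfl⟩).trans (hℓ g)⟩

lemma exists_strongDual_weightedDeriv_eq (L : 𝓢(E, F) →L[ℂ] ℂ) :
    ∃ (s : Finset (ℕ × ℕ))
      (Λ : StrongDual ℂ (∀ i : s, NormedBCF E (E [×i.1.2]→L[ℝ] F))),
      ∀ g, Λ (fun i => weightedDeriv i.1.1 i.1.2 g) = L g := by
  obtain ⟨s, C, -, hC⟩ := Seminorm.bound_of_continuous (schwartz_withSeminorms ℂ E F)
    ((normSeminorm ℂ ℂ).comp L.toLinearMap) (continuous_norm.comp L.continuous)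
  refine ⟨s, exists_strongDual_comp_eq L.toLinearMap
    (LinearMap.pi fun i : s => (weightedDeriv i.1.1 i.1.2).toLinearMap) C fun g => ?_⟩
  refine (hC g).trans (mul_le_mul_of_nonneg_left ?_ C.coe_nonneg)
  refine Seminorm.finset_sup_apply_le (norm_nonneg _) fun i hi => ?_
  rw [SchwartzMap.schwartzSeminormFamily_apply, ← norm_weightedDeriv]
  exact norm_le_pi_norm (fun i : s => weightedDeriv i.1.1 i.1.2 g) ⟨i, hi⟩

end WeightedDerivatives

section Convolution

variable {E : Type*} [NormedAddCommGroup E] [InnerProductSpace ℝ E] [FiniteDimensional ℝ E]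
  [MeasurableSpace E] [BorelSpace E]

lemma fourier_injective : Function.Injective (𝓕 : 𝓢(E, ℂ) → 𝓢(E, ℂ)) :=
  (FourierTransform.fourierEquiv ℂ 𝓢(E, ℂ)).injective

/-- Convolution of complex-valued Schwartz functions. -/
abbrev sconv (A g : 𝓢(E, ℂ)) : 𝓢(E, ℂ) :=
  SchwartzMap.convolution (ContinuousLinearMap.mul ℂ ℂ) A g

lemma sconv_apply (A g : 𝓢(E, ℂ)) (x : E) : sconv A g x = ∫ z, A z * g (x - z) :=
  SchwartzMap.convolution_apply _ A g x

lemma lineDeriv_sconv (A g : 𝓢(E, ℂ)) (v : E) : ∂_{v} (sconv A g) = sconv A (∂_{v} g) := by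
  have hg : (fun x : E => inner ℝ x v).HasTemperateGrowth := by fun_prop
  refine fourier_injective (SchwartzMap.ext fun x => ?_)
  simp only [SchwartzMap.fourier_lineDerivOp_eq, SchwartzMap.fourier_convolution,
    SchwartzMap.pairing_apply_apply, _root_.smul_apply,
    SchwartzMap.smulLeftCLM_apply_apply hg, ContinuousLinearMap.mul_apply', Complex.real_smul,
    smul_eq_mul]
  ring

lemma iteratedLineDeriv_sconv (A g : 𝓢(E, ℂ)) {m : ℕ} (v : Fin m → E) :
    ∂^{v} (sconv A g) = sconv A (∂^{v} g) := by
  induction m with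
  | zero => simp
  | succ m ih =>
    simp only [LineDeriv.iteratedLineDerivOp_succ_left, ih, lineDeriv_sconv]

lemma iteratedFDeriv_sconv (A g : 𝓢(E, ℂ)) (m : ℕ) (v : Fin m → E) (x : E) :
    iteratedFDeriv ℝ m (sconv A g) x v = ∫ z, A z * iteratedFDeriv ℝ m g (x - z) v := by
  simp only [← SchwartzMap.iteratedLineDerivOp_eq_iteratedFDeriv, iteratedLineDeriv_sconv,
    sconv_apply]

lemma integrable_one_add_norm_pow_mul (A : 𝓢(E, ℂ)) (k : ℕ) :
    Integrable fun z : E => (1 + ‖z‖) ^ k * ‖A z‖ := by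
  have hmaj := ((A.integrable_pow_mul volume 0).add (A.integrable_pow_mul volume k)).const_mul
    (2 ^ (k - 1))
  refine hmaj.mono' (by have := A.continuous; fun_prop) (Eventually.of_forall fun z => ?_)
  rw [Real.norm_of_nonneg (by positivity)]
  calc (1 + ‖z‖) ^ k * ‖A z‖ ≤ 2 ^ (k - 1) * (1 ^ k + ‖z‖ ^ k) * ‖A z‖ := by
        gcongr
        exact add_pow_le zero_le_one (norm_nonneg z) k
    _ = 2 ^ (k - 1) * (‖z‖ ^ 0 * ‖A z‖ + ‖z‖ ^ k * ‖A z‖) := by rw [one_pow, pow_zero]; ring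

lemma integrable_smul_weightedDeriv (k m : ℕ) (A g : 𝓢(E, ℂ)) :
    Integrable fun z => A z • weightedDeriv k m (SchwartzMap.compSubConstCLM ℂ z g) := by
  obtain ⟨S, -, hS⟩ := exists_seminorm_compSubConstCLM_le ℂ g k m
  refine ((integrable_one_add_norm_pow_mul A k).const_mul S).mono'
    (A.continuous.smul ((weightedDeriv k m).continuous.comp
      (continuous_compSubConstCLM_apply ℂ g))).aestronglyMeasurable
    (Eventually.of_forall fun z => ?_)
  rw [norm_smul, norm_weightedDeriv]
  calc ‖A z‖ * _ ≤ ‖A z‖ * (S * (1 + ‖z‖) ^ k) := by gcongr; exact hS z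
    _ = S * ((1 + ‖z‖) ^ k * ‖A z‖) := by ring

lemma integral_smul_weightedDeriv (k m : ℕ) (A g : 𝓢(E, ℂ)) :
    ∫ z, A z • weightedDeriv k m (SchwartzMap.compSubConstCLM ℂ z g)
      = weightedDeriv k m (sconv A g) := by
  ext x v
  let eval : NormedBCF E (E [×m]→L[ℝ] ℂ) →L[ℝ] ℂ :=
    (ContinuousMultilinearMap.apply ℝ (fun _ : Fin m => E) ℂ v).comp
      (BoundedContinuousFunction.evalCLM ℝ x)
  refine (eval.integral_comp_comm (integrable_smul_weightedDeriv k m A g)).symm.trans ?_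
  change _ = ‖x‖ ^ k • iteratedFDeriv ℝ m (sconv A g) x v
  rw [iteratedFDeriv_sconv, ← integral_smul]
  refine integral_congr_ae (Eventually.of_forall fun z => ?_)
  change A z • ‖x‖ ^ k • iteratedFDeriv ℝ m (SchwartzMap.compSubConstCLM ℂ z g) x v = _
  rw [iteratedFDeriv_compSubConstCLM, smul_comm, smul_eq_mul]

/- A Schwartz space is not normed, so the integral is moved inside the continuous functional only
after factoring it through finitely many weighted derivatives. -/
lemma clm_sconv (L : 𝓢(E, ℂ) →L[ℂ] ℂ) (A g : 𝓢(E, ℂ)) :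
    L (sconv A g) = ∫ z, A z * L (SchwartzMap.compSubConstCLM ℂ z g) := by
  obtain ⟨s, Λ, hΛ⟩ := exists_strongDual_weightedDeriv_eq L
  have hint : ∀ i : s, Integrable fun z =>
      A z • weightedDeriv i.1.1 i.1.2 (SchwartzMap.compSubConstCLM ℂ z g) :=
    fun i => integrable_smul_weightedDeriv i.1.1 i.1.2 A g
  calc L (sconv A g)
      = Λ (fun i => ∫ z, A z • weightedDeriv i.1.1 i.1.2 (SchwartzMap.compSubConstCLM ℂ z g)) := by
        simp only [integral_smul_weightedDeriv, hΛ]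
    _ = Λ (∫ z, A z • fun i : s => weightedDeriv i.1.1 i.1.2 (SchwartzMap.compSubConstCLM ℂ z g)) :=
        congrArg Λ (funext fun i => (eval_integral hint i).symm)
    _ = ∫ z, A z * L (SchwartzMap.compSubConstCLM ℂ z g) := by
        rw [← Λ.integral_comp_comm (φ := fun z => A z • fun i : s => weightedDeriv i.1.1 i.1.2
          (SchwartzMap.compSubConstCLM ℂ z g)) (Integrable.of_eval hint)]
        simp only [map_smul, hΛ, smul_eq_mul]

end Convolution

section DilationAndProduct

variable {E : Type*} [NormedAddCommGroup E] [NormedSpace ℝ E]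

/-- The dilation `x ↦ g (t • x)` of a Schwartz function; `t` is a unit because this is not a
Schwartz function for `t = 0`. -/
def dilate (t : ℝˣ) : 𝓢(E, ℂ) →L[ℂ] 𝓢(E, ℂ) :=
  SchwartzMap.compCLMOfContinuousLinearEquiv ℂ (ContinuousLinearEquiv.smulLeft t)

@[simp] lemma dilate_apply (t : ℝˣ) (g : 𝓢(E, ℂ)) (x : E) : dilate t g x = g ((t : ℝ) • x) := rfl

/-- The pointwise product of Schwartz functions. -/
abbrev schwartzMul (g h : 𝓢(E, ℂ)) : 𝓢(E, ℂ) :=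
  SchwartzMap.pairing (ContinuousLinearMap.mul ℂ ℂ) g h

lemma schwartzMul_apply (g h : 𝓢(E, ℂ)) (x : E) : schwartzMul g h x = g x * h x := rfl

lemma schwartzMul_comm (g h : 𝓢(E, ℂ)) : schwartzMul g h = schwartzMul h g :=
  SchwartzMap.ext fun _ => mul_comm _ _

lemma dilate_schwartzMul (t : ℝˣ) (g h : 𝓢(E, ℂ)) :
    dilate t (schwartzMul g h) = schwartzMul (dilate t g) (dilate t h) := rfl

end DilationAndProduct

section PeetreWeight

variable {E : Type*} [NormedAddCommGroup E]

/-- The denominator `1 + (ρ ‖v‖) ^ a` of the Peetre maximal function at scale `ρ`. -/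
def peetreWeight (a ρ : ℝ) (v : E) : ℝ≥0∞ := ENNReal.ofReal (1 + (ρ * ‖v‖) ^ a)

lemma peetreWeight_mono {a ρ σ : ℝ} (ha : 0 ≤ a) (hρ : 0 ≤ ρ) (h : ρ ≤ σ) (v : E) :
    peetreWeight a ρ v ≤ peetreWeight a σ v := by
  unfold peetreWeight
  gcongr

lemma peetreWeight_smul [NormedSpace ℝ E] (a ρ t : ℝ) (v : E) :
    peetreWeight a ρ (t • v) = peetreWeight a (ρ * |t|) v := by
  rw [peetreWeight, peetreWeight, norm_smul, Real.norm_eq_abs, mul_assoc]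

lemma peetreWeight_ne_zero {a ρ : ℝ} (hρ : 0 ≤ ρ) (v : E) : peetreWeight a ρ v ≠ 0 := by
  rw [peetreWeight, ENNReal.ofReal_ne_zero_iff]
  positivity

lemma peetreWeight_two_pow_add_le {a : ℝ} (ha : 0 ≤ a) (j d : ℕ) (v : E) :
    peetreWeight a (2 ^ (j + d)) v ≤ (2 ^ a) ^ d * peetreWeight a (2 ^ j) v := by
  have hpow : (2 ^ a) ^ d = ENNReal.ofReal ((2 ^ d) ^ a) := by
    rw [← ENNReal.ofReal_rpow_of_pos (by positivity), ENNReal.ofReal_pow two_pos.le,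
      ENNReal.ofReal_ofNat, ← ENNReal.rpow_mul_natCast, ← ENNReal.rpow_natCast_mul, mul_comm]
  unfold peetreWeight
  rw [hpow, ← ENNReal.ofReal_mul (by positivity)]
  refine ENNReal.ofReal_le_ofReal ?_
  rw [pow_add, mul_right_comm, Real.mul_rpow (by positivity) (by positivity), mul_add, mul_one,
    mul_comm]
  gcongr
  exact Real.one_le_rpow (one_le_pow₀ one_le_two) ha

lemma peetreWeight_sub_le {a ρ : ℝ} (ha : 0 ≤ a) (hρ : 0 ≤ ρ) (v w : E) :
    peetreWeight a ρ (v - w) ≤ 2 ^ a * peetreWeight a ρ v * peetreWeight a ρ w := by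
  unfold peetreWeight
  rw [← ENNReal.ofReal_ofNat, ENNReal.ofReal_rpow_of_pos two_pos,
    ← ENNReal.ofReal_mul (by positivity), ← ENNReal.ofReal_mul (by positivity)]
  refine ENNReal.ofReal_le_ofReal ?_
  set A := ρ * ‖v‖
  set B := ρ * ‖w‖
  have hA : 0 ≤ A := by positivity
  have : 0 ≤ B := by positivity
  have hmax : (2 * max A B) ^ a ≤ 2 ^ a * (A ^ a + B ^ a) := by
    rw [Real.mul_rpow two_pos.le (le_max_of_le_left hA)]
    gcongr
    rcases max_choice A B with h | h <;> rw [h]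
    · exact le_add_of_nonneg_right (by positivity)
    · exact le_add_of_nonneg_left (by positivity)
  have hsub : ρ * ‖v - w‖ ≤ 2 * max A B := by
    calc ρ * ‖v - w‖ ≤ ρ * (‖v‖ + ‖w‖) := by gcongr; exact norm_sub_le v w
      _ = A + B := mul_add _ _ _
      _ ≤ 2 * max A B := by linarith [le_max_left A B, le_max_right A B]
  calc 1 + (ρ * ‖v - w‖) ^ a ≤ 1 + (2 * max A B) ^ a := by
        gcongr
    _ ≤ 2 ^ a + 2 ^ a * (A ^ a + B ^ a) := by
        gcongr
        exact Real.one_le_rpow one_le_two ha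
    _ ≤ 2 ^ a + 2 ^ a * (A ^ a + B ^ a) + 2 ^ a * (A ^ a * B ^ a) :=
        le_add_of_nonneg_right (by positivity)
    _ = 2 ^ a * (1 + A ^ a) * (1 + B ^ a) := by ring

lemma peetreWeight_le {a ρ : ℝ} (ha : 0 ≤ a) (hρ : 0 ≤ ρ) (v : E) :
    peetreWeight a ρ v ≤
      ENNReal.ofReal (1 + ρ ^ a) * ENNReal.ofReal ((1 + ‖v‖ ^ 2) ^ (a / 2)) := by
  have h1 : 1 ≤ (1 + ‖v‖ ^ 2) ^ (a / 2) :=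
    Real.one_le_rpow (le_add_of_nonneg_right (sq_nonneg _)) (by positivity)
  have hv : ‖v‖ ^ a ≤ (1 + ‖v‖ ^ 2) ^ (a / 2) := by
    calc ‖v‖ ^ a = (‖v‖ ^ 2) ^ (a / 2) := by
          rw [← Real.rpow_natCast, ← Real.rpow_mul (norm_nonneg v), Nat.cast_ofNat,
            mul_div_cancel₀ a two_ne_zero]
      _ ≤ (1 + ‖v‖ ^ 2) ^ (a / 2) := by gcongr; linarith
  rw [← ENNReal.ofReal_mul (by positivity)]
  refine ENNReal.ofReal_le_ofReal ?_
  rw [Real.mul_rpow hρ (norm_nonneg v), add_mul, one_mul]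
  gcongr

end PeetreWeight

section FourierKernels

variable {E : Type*} [NormedAddCommGroup E] [InnerProductSpace ℝ E] [FiniteDimensional ℝ E]
  [MeasurableSpace E] [BorelSpace E]

lemma fourier_fourier_apply (g : 𝓢(E, ℂ)) (x : E) : 𝓕 (𝓕 g) x = g (-x) := by
  have h : 𝓕⁻ (𝓕 g) (-x) = g (-x) := by rw [FourierTransform.fourierInv_fourier_eq]
  rw [← h, SchwartzMap.fourierInv_coe, Real.fourierInv_eq_fourier_neg, neg_neg,
    ← SchwartzMap.fourier_coe]

lemma fourier_schwartzMul (g h : 𝓢(E, ℂ)) : 𝓕 (schwartzMul g h) = sconv (𝓕 g) (𝓕 h) := by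
  refine fourier_injective (SchwartzMap.ext fun x => ?_)
  rw [SchwartzMap.fourier_convolution, fourier_fourier_apply, schwartzMul_apply,
    ← fourier_fourier_apply, ← fourier_fourier_apply]
  rfl

lemma fourier_dilate_apply_smul (t : ℝˣ) (g : 𝓢(E, ℂ)) (z : E) :
    𝓕 (dilate t g) ((t : ℝ) • z) = |((t : ℝ) ^ Module.finrank ℝ E)⁻¹| • 𝓕 g z := by
  rw [SchwartzMap.fourier_coe, SchwartzMap.fourier_coe, Real.fourier_eq', Real.fourier_eq',
    ← Measure.integral_comp_smul volume
      (fun v => Complex.exp (↑(-2 * π * inner ℝ v z) * Complex.I) • g v) (t : ℝ)]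
  simp only [dilate_apply, inner_smul_left, inner_smul_right, RCLike.conj_to_real]

/-- The `L¹` norm of the Fourier transform of `g` with respect to the Peetre weight of scale `ρ`. -/
def kernelNorm (a ρ : ℝ) (g : 𝓢(E, ℂ)) : ℝ≥0∞ :=
  ∫⁻ z, ‖𝓕 g z‖ₑ * peetreWeight a ρ z

lemma kernelNorm_two_pow_add_le {a : ℝ} (ha : 0 ≤ a) (j d : ℕ) (g : 𝓢(E, ℂ)) :
    kernelNorm a (2 ^ (j + d)) g ≤ (2 ^ a) ^ d * kernelNorm a (2 ^ j) g := by
  unfold kernelNorm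
  rw [← lintegral_const_mul' _ _ (by finiteness)]
  refine lintegral_mono fun z => ?_
  dsimp only
  rw [mul_left_comm]
  gcongr
  exact peetreWeight_two_pow_add_le ha j d z

lemma kernelNorm_dilate (a ρ : ℝ) (t : ℝˣ) (g : 𝓢(E, ℂ)) :
    kernelNorm a ρ (dilate t g) = kernelNorm a (ρ * |(t : ℝ)|) g := by
  set d := Module.finrank ℝ E
  set c : ℝ≥0∞ := ENNReal.ofReal |((t : ℝ) ^ d)⁻¹| with hc
  have hc0 : c ≠ 0 := by simp [hc]
  have hmap : Measure.map ((t : ℝ) • · : E → E) volume = c • volume :=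
    Measure.map_addHaar_smul volume t.ne_zero
  rw [← ENNReal.mul_right_inj hc0 ENNReal.ofReal_ne_top]
  unfold kernelNorm
  rw [← smul_eq_mul, ← lintegral_smul_measure, ← hmap,
    (measurableEmbedding_const_smul₀ t.ne_zero).lintegral_map,
    ← lintegral_const_mul' _ _ ENNReal.ofReal_ne_top]
  refine lintegral_congr fun z => ?_
  rw [fourier_dilate_apply_smul, enorm_smul,
    Real.enorm_of_nonneg (abs_nonneg _), peetreWeight_smul, mul_assoc]

lemma exists_kernelNorm_le_enorm {a ρ : ℝ} (ha : 0 ≤ a) (hρ : 0 ≤ ρ) :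
    ∃ (T : 𝓢(E, ℂ) →L[ℂ] Lp ℂ 1 (volume : Measure E)) (C : ℝ≥0∞), C ≠ ∞ ∧
      ∀ g, kernelNorm a ρ g ≤ C * ‖T g‖ₑ := by
  have := Function.hasTemperateGrowth_one_add_norm_sq_rpow E (a / 2)
  let M : 𝓢(E, ℂ) →L[ℂ] 𝓢(E, ℂ) :=
    (SchwartzMap.smulLeftCLM ℂ fun z : E => (((1 + ‖z‖ ^ 2) ^ (a / 2) : ℝ) : ℂ)).comp
      (FourierTransform.fourierCLM ℂ 𝓢(E, ℂ))
  have hM : ∀ g z, M g z = (((1 + ‖z‖ ^ 2) ^ (a / 2) : ℝ) : ℂ) * 𝓕 g z := fun g z =>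
    SchwartzMap.smulLeftCLM_apply_apply (by fun_prop) _ _
  refine ⟨(SchwartzMap.toLpCLM ℂ ℂ 1).comp M, ENNReal.ofReal (1 + ρ ^ a), ENNReal.ofReal_ne_top,
    fun g => ?_⟩
  rw [ContinuousLinearMap.comp_apply, SchwartzMap.toLpCLM_apply, SchwartzMap.toLp, Lp.enorm_toLp,
    eLpNorm_one_eq_lintegral_enorm, ← lintegral_const_mul' _ _ ENNReal.ofReal_ne_top]
  refine lintegral_mono fun z => ?_
  dsimp only
  rw [hM, enorm_mul, ← ofReal_norm (Complex.ofReal _), Complex.norm_real,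
    Real.norm_of_nonneg (by positivity), ← mul_assoc, mul_comm]
  gcongr
  exact peetreWeight_le ha hρ z

lemma exists_kernelNorm_le_of_seminorm_le {ι : Type*} {a ρ : ℝ} (ha : 0 ≤ a) (hρ : 0 ≤ ρ)
    (g : ι → 𝓢(E, ℂ)) (r : ι → ℝ)
    (hg : ∀ k m, ∃ B, ∀ i, SchwartzMap.seminorm ℂ k m (g i) ≤ B * r i) (hr : ∀ i, 0 ≤ r i) :
    ∃ C : ℝ≥0∞, C ≠ ∞ ∧ ∀ i, kernelNorm a ρ (g i) ≤ C * ENNReal.ofReal (r i) := by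
  choose B hB using hg
  obtain ⟨T, C, hC, hT⟩ := exists_kernelNorm_le_enorm (E := E) ha hρ
  obtain ⟨s, D, -, hD⟩ := Seminorm.bound_of_continuous (schwartz_withSeminorms ℂ E ℂ)
    ((normSeminorm ℂ _).comp T.toLinearMap) (continuous_norm.comp T.continuous)
  have hsup : ∀ i, s.sup (schwartzSeminormFamily ℂ E ℂ) (g i) ≤
      (∑ km ∈ s, |B km.1 km.2|) * r i := fun i => by
    refine Seminorm.finset_sup_apply_le (by have := hr i; positivity) fun km hkm =>
      (hB km.1 km.2 i).trans ?_
    gcongr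
    · exact hr i
    · exact (le_abs_self _).trans
        (Finset.single_le_sum (f := fun km => |B km.1 km.2|) (fun _ _ => abs_nonneg _) hkm)
  refine ⟨C * ENNReal.ofReal (D * ∑ km ∈ s, |B km.1 km.2|),
    ENNReal.mul_ne_top hC ENNReal.ofReal_ne_top, fun i => (hT (g i)).trans ?_⟩
  rw [mul_assoc, ← ENNReal.ofReal_mul (by positivity), mul_assoc, ← ofReal_norm]
  gcongr
  exact (hD (g i)).trans (mul_le_mul_of_nonneg_left (hsup i) D.coe_nonneg)

end FourierKernels

section VanishingOrder

variable {E F : Type*} [NormedAddCommGroup E] [NormedSpace ℝ E] [NormedAddCommGroup F]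
  [NormedSpace ℝ F]

lemma exists_norm_iteratedFDeriv_le_mul_pow {f : E → F} (hf : ContDiff ℝ (⊤ : ℕ∞) f)
    (hbd : ∀ i, ∃ B, ∀ x, ‖iteratedFDeriv ℝ i f x‖ ≤ B) {R : ℕ}
    (hR : ∀ i < R, iteratedFDeriv ℝ i f 0 = 0) (i : ℕ) :
    ∃ C, 0 ≤ C ∧ ∀ y, ‖iteratedFDeriv ℝ i f y‖ ≤ C * ‖y‖ ^ (R - i) := by
  induction hd : R - i generalizing i with
  | zero =>
    obtain ⟨B, hB⟩ := hbd i
    exact ⟨B, (norm_nonneg _).trans (hB 0), by simpa only [pow_zero, mul_one] using hB⟩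
  | succ d ih =>
    obtain ⟨C, hC0, hC⟩ := ih (i + 1) (by omega)
    refine ⟨C, hC0, fun y => ?_⟩
    have hball : ∀ z ∈ Metric.closedBall (0 : E) ‖y‖,
        ‖fderiv ℝ (iteratedFDeriv ℝ i f) z‖ ≤ C * ‖y‖ ^ d := fun z hz => by
      rw [mem_closedBall_zero_iff] at hz
      rw [norm_fderiv_iteratedFDeriv]
      exact (hC z).trans (by gcongr)
    have hmv := (convex_closedBall (0 : E) ‖y‖).norm_image_sub_le_of_norm_fderiv_le
      (fun z _ => (hf.differentiable_iteratedFDeriv (mod_cast ENat.natCast_lt_top i)) z) hball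
      (Metric.mem_closedBall_self (norm_nonneg y)) (y := y) (by simp)
    rwa [hR i (by omega), sub_zero, sub_zero, mul_assoc, ← pow_succ] at hmv

lemma norm_iteratedFDeriv_smul_mul_le {f g : E → ℂ} (hf : ContDiff ℝ (⊤ : ℕ∞) f)
    (hg : ContDiff ℝ (⊤ : ℕ∞) g) (s : ℝ) (m : ℕ) (x : E) :
    ‖iteratedFDeriv ℝ m (fun y => f (s • y) * g y) x‖ ≤ ∑ i ∈ Finset.range (m + 1),
      m.choose i * (|s| ^ i * ‖iteratedFDeriv ℝ i f (s • x)‖) * ‖iteratedFDeriv ℝ (m - i) g x‖ := by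
  refine (norm_iteratedFDeriv_mul_le (hf.comp (contDiff_const_smul s)) hg x
    (mod_cast le_top)).trans_eq (Finset.sum_congr rfl fun i _ => ?_)
  rw [Function.comp_def, iteratedFDeriv_comp_const_smul s (hf.of_le (mod_cast le_top)), norm_smul,
    norm_pow, Real.norm_eq_abs]

lemma exists_norm_pow_mul_iteratedFDeriv_smul_mul_le {f : E → ℂ} (hf : ContDiff ℝ (⊤ : ℕ∞) f)
    (hbd : ∀ i, ∃ B, ∀ x, ‖iteratedFDeriv ℝ i f x‖ ≤ B) {R : ℕ}
    (hR : ∀ i < R, iteratedFDeriv ℝ i f 0 = 0) (g : 𝓢(E, ℂ)) (k m : ℕ) :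
    ∃ C, 0 ≤ C ∧ ∀ s : ℝ, |s| ≤ 1 → ∀ x,
      ‖x‖ ^ k * ‖iteratedFDeriv ℝ m (fun y => f (s • y) * g y) x‖ ≤ C * |s| ^ R := by
  choose C hC0 hC using exists_norm_iteratedFDeriv_le_mul_pow hf hbd hR
  refine ⟨∑ i ∈ Finset.range (m + 1),
    m.choose i * (C i * SchwartzMap.seminorm ℂ (k + (R - i)) (m - i) g),
    Finset.sum_nonneg fun i _ => by have := hC0 i; positivity, fun s hs x => ?_⟩
  refine (mul_le_mul_of_nonneg_left (norm_iteratedFDeriv_smul_mul_le hf (g.smooth ⊤) s m x)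
    (by positivity)).trans ?_
  rw [Finset.mul_sum, Finset.sum_mul]
  refine Finset.sum_le_sum fun i _ => ?_
  have hCi := hC0 i
  calc ‖x‖ ^ k * (m.choose i * (|s| ^ i * ‖iteratedFDeriv ℝ i f (s • x)‖) *
          ‖iteratedFDeriv ℝ (m - i) g x‖)
      ≤ ‖x‖ ^ k * (m.choose i * (|s| ^ i * (C i * ‖s • x‖ ^ (R - i))) *
          ‖iteratedFDeriv ℝ (m - i) g x‖) := by gcongr; exact hC i _
    _ = m.choose i * (C i * (‖x‖ ^ (k + (R - i)) * ‖iteratedFDeriv ℝ (m - i) g x‖)) *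
          |s| ^ (i + (R - i)) := by
        rw [norm_smul, Real.norm_eq_abs, mul_pow, pow_add, pow_add]; ring
    _ ≤ m.choose i * (C i * SchwartzMap.seminorm ℂ (k + (R - i)) (m - i) g) * |s| ^ R := by
        gcongr ?_ * (_ * ?_) * ?_
        · exact SchwartzMap.le_seminorm ℂ _ _ g x
        · exact pow_le_pow_of_le_one (abs_nonneg s) hs (by omega)

lemma exists_norm_iteratedFDeriv_le (g : 𝓢(E, F)) (i : ℕ) :
    ∃ B, ∀ x, ‖iteratedFDeriv ℝ i g x‖ ≤ B :=
  ⟨_, fun x => SchwartzMap.norm_iteratedFDeriv_le_seminorm ℝ g i x⟩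

lemma exists_seminorm_schwartzMul_dilate_le {g : 𝓢(E, ℂ)} {R : ℕ}
    (hR : ∀ i < R, iteratedFDeriv ℝ i g 0 = 0) (h : 𝓢(E, ℂ)) (k m : ℕ) :
    ∃ C, 0 ≤ C ∧ ∀ t : ℝˣ, |(t : ℝ)| ≤ 1 →
      SchwartzMap.seminorm ℂ k m (schwartzMul (dilate t g) h) ≤ C * |(t : ℝ)| ^ R := by
  obtain ⟨C, hC0, hC⟩ := exists_norm_pow_mul_iteratedFDeriv_smul_mul_le (g.smooth ⊤)
    (exists_norm_iteratedFDeriv_le g) hR h k m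
  exact ⟨C, hC0, fun t ht =>
    SchwartzMap.seminorm_le_bound _ _ _ _ (by positivity) fun x => hC t ht x⟩

lemma exists_norm_iteratedFDeriv_sub_const_le (g : 𝓢(E, F)) (c : F) (i : ℕ) :
    ∃ B, ∀ x, ‖iteratedFDeriv ℝ i (fun y => g y - c) x‖ ≤ B := by
  obtain ⟨B, hB⟩ := exists_norm_iteratedFDeriv_le g i
  refine ⟨B + ‖c‖, fun x => ?_⟩
  rw [fun_iteratedFDeriv_sub_apply (g.contDiffAt _) contDiffAt_const]
  refine (norm_sub_le _ _).trans (add_le_add (hB x) ?_)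
  rcases i with - | i
  · exact norm_iteratedFDeriv_zero.le
  · rw [iteratedFDeriv_const_of_ne i.succ_ne_zero]
    simp

lemma tendsto_schwartzMul_dilate {ι : Type*} {l : Filter ι} {t : ι → ℝˣ}
    (ht : Tendsto (fun i => (t i : ℝ)) l (𝓝 0)) {χ : 𝓢(E, ℂ)} (hχ : χ 0 = 1) (g : 𝓢(E, ℂ)) :
    Tendsto (fun i => schwartzMul (dilate (t i) χ) g) l (𝓝 g) := by
  rw [(schwartz_withSeminorms ℂ E ℂ).tendsto_nhds]
  rintro ⟨k, m⟩ ε hε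
  obtain ⟨C, hC0, hC⟩ := exists_norm_pow_mul_iteratedFDeriv_smul_mul_le (R := 1)
    ((χ.smooth ⊤).sub contDiff_const) (exists_norm_iteratedFDeriv_sub_const_le χ 1)
    (fun i hi => by
      obtain rfl : i = 0 := by omega
      ext
      simp [hχ]) g k m
  have hlim : Tendsto (fun i => C * |(t i : ℝ)| ^ 1) l (𝓝 0) := by
    simpa using (ht.abs.const_mul C)
  filter_upwards [hlim.eventually_lt_const hε, ht.abs.eventually_le_const (by simp : |(0 : ℝ)| < 1)]
    with i hi hi1
  refine (SchwartzMap.seminorm_le_bound ℂ k m _ (by positivity) fun x => ?_).trans_lt hi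
  convert hC (t i) hi1 x using 4
  exact funext fun y => (sub_one_mul (χ ((t i : ℝ) • y)) (g y)).symm

end VanishingOrder

section DyadicSystems

/-- The number `1 / 2` as a unit of `ℝ`, the ratio of consecutive dyadic dilations. -/
def halfUnit : ℝˣ := Units.mk0 2⁻¹ (inv_ne_zero two_ne_zero)

lemma coe_halfUnit_pow (j : ℕ) : ((halfUnit ^ j : ℝˣ) : ℝ) = 2⁻¹ ^ j :=
  Units.val_pow_eq_pow_val halfUnit j

lemma ofReal_abs_halfUnit_pow (j : ℕ) :
    ENNReal.ofReal |((halfUnit ^ j : ℝˣ) : ℝ)| = 2⁻¹ ^ j := by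
  rw [coe_halfUnit_pow, abs_of_pos (by positivity), ENNReal.ofReal_pow (by positivity),
    ENNReal.ofReal_inv_of_pos two_pos, ENNReal.ofReal_ofNat]

section

variable {E : Type*} [NormedAddCommGroup E] [NormedSpace ℝ E]

/-- The dyadic system `g₀, g₁, g₁(2⁻¹ ·), g₁(2⁻² ·), …` generated by `g₀` and `g₁`. -/
def dyadicSystem (g₀ g₁ : 𝓢(E, ℂ)) : ℕ → 𝓢(E, ℂ)
  | 0 => g₀
  | j + 1 => dilate (halfUnit ^ j) g₁

lemma schwartzMul_dilate_dilate (s t : ℝˣ) (g h : 𝓢(E, ℂ)) :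
    schwartzMul (dilate (s * t) g) (dilate s h) = dilate s (schwartzMul (dilate t g) h) := by
  ext x
  simp only [schwartzMul_apply, dilate_apply, Units.val_mul, smul_smul, mul_comm]

end

variable {E : Type*} [NormedAddCommGroup E] [InnerProductSpace ℝ E] [FiniteDimensional ℝ E]
  [MeasurableSpace E] [BorelSpace E]

lemma kernelNorm_ne_top {a ρ : ℝ} (ha : 0 ≤ a) (hρ : 0 ≤ ρ) (g : 𝓢(E, ℂ)) :
    kernelNorm a ρ g ≠ ∞ := by
  obtain ⟨T, C, hC, hT⟩ := exists_kernelNorm_le_enorm (E := E) ha hρ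
  exact ne_top_of_le_ne_top (ENNReal.mul_ne_top hC enorm_ne_top) (hT g)

lemma exists_kernelNorm_schwartzMul_dilate_le {a ρ : ℝ} (ha : 0 ≤ a) (hρ : 0 ≤ ρ)
    {g : 𝓢(E, ℂ)} {R : ℕ} (hR : ∀ i < R, iteratedFDeriv ℝ i g 0 = 0) (h : 𝓢(E, ℂ)) :
    ∃ C : ℝ≥0∞, C ≠ ∞ ∧ ∀ d : ℕ,
      kernelNorm a ρ (schwartzMul (dilate (halfUnit ^ d) g) h) ≤ C * (2⁻¹ ^ R) ^ d := by
  obtain ⟨C, hC, hle⟩ := exists_kernelNorm_le_of_seminorm_le ha hρ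
    (fun d : ℕ => schwartzMul (dilate (halfUnit ^ d) g) h)
    (fun d => |((halfUnit ^ d : ℝˣ) : ℝ)| ^ R)
    (fun k m => by
      obtain ⟨B, -, hB⟩ := exists_seminorm_schwartzMul_dilate_le hR h k m
      refine ⟨B, fun d => hB _ ?_⟩
      rw [coe_halfUnit_pow, abs_of_pos (by positivity)]
      exact pow_le_one₀ (by norm_num) (by norm_num))
    (fun d => by positivity)
  refine ⟨C, hC, fun d => (hle d).trans_eq ?_⟩
  rw [ENNReal.ofReal_pow (abs_nonneg _), ofReal_abs_halfUnit_pow, pow_right_comm]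

lemma exists_kernelNorm_dyadicSystem_le {a : ℝ} (ha : 0 ≤ a) {g₁ : 𝓢(E, ℂ)} {R : ℕ}
    (hR : ∀ i < R, iteratedFDeriv ℝ i g₁ 0 = 0) (g₀ h₀ h₁ : 𝓢(E, ℂ)) :
    ∃ C : ℝ≥0∞, C ≠ ∞ ∧ ∀ κ d : ℕ,
      kernelNorm a (2 ^ κ) (schwartzMul (dyadicSystem g₀ g₁ (κ + d)) (dyadicSystem h₀ h₁ κ)) ≤
        C * (2⁻¹ ^ R) ^ d := by
  obtain ⟨C₀, hC₀, h0⟩ :=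
    exists_kernelNorm_schwartzMul_dilate_le ha zero_le_one hR h₀
  obtain ⟨C₁, hC₁, h1⟩ :=
    exists_kernelNorm_schwartzMul_dilate_le ha zero_le_two hR h₁
  set K := kernelNorm a 1 (schwartzMul g₀ h₀)
  refine ⟨K + C₀ * 2 ^ R + C₁, by finiteness [kernelNorm_ne_top ha zero_le_one (schwartzMul g₀ h₀)],
    fun κ d => ?_⟩
  rw [add_mul, add_mul]
  match κ, d with
  | 0, 0 =>
    refine le_add_right (le_add_right ?_)
    simp [K, dyadicSystem]
  | 0, d + 1 =>
    refine le_add_right (le_add_left ?_)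
    rw [pow_zero, zero_add, pow_succ', mul_assoc, ← mul_assoc (2 ^ R), ← mul_pow,
      ENNReal.mul_inv_cancel two_ne_zero ENNReal.ofNat_ne_top, one_pow, one_mul]
    exact h0 d
  | j + 1, d =>
    have hprod : schwartzMul (dyadicSystem g₀ g₁ (j + 1 + d)) (dyadicSystem h₀ h₁ (j + 1)) =
        dilate (halfUnit ^ j) (schwartzMul (dilate (halfUnit ^ d) g₁) h₁) := by
      rw [← schwartzMul_dilate_dilate, ← pow_add, add_right_comm]
      rfl
    have hscale : (2 : ℝ) ^ (j + 1) * |((halfUnit ^ j : ℝˣ) : ℝ)| = 2 := by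
      rw [coe_halfUnit_pow, abs_of_pos (by positivity), pow_succ, inv_pow]
      field_simp
    rw [hprod, kernelNorm_dilate, hscale]
    exact (h1 d).trans le_add_self

end DyadicSystems

section CalderonResolution

variable {E : Type*} [NormedAddCommGroup E] [NormedSpace ℝ E]

lemma exists_schwartzMul_eq {θ φ : 𝓢(E, ℂ)} {K : Set E} (hK : IsCompact K)
    (hθ : ∀ x ∉ K, θ x = 0) (hφ : ∀ x ∈ K, φ x ≠ 0) :
    ∃ g : 𝓢(E, ℂ), schwartzMul g φ = θ ∧ ∀ x, θ x = 0 → g x = 0 := by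
  have hsupp : HasCompactSupport fun x => θ x / φ x :=
    HasCompactSupport.intro hK fun x hx => by rw [hθ x hx, zero_div]
  have hsmooth : ContDiff ℝ (⊤ : ℕ∞) fun x => θ x / φ x := by
    refine contDiff_iff_contDiffAt.2 fun x => ?_
    by_cases hx : x ∈ K
    · simp_rw [div_eq_mul_inv]
      exact (θ.contDiffAt _).mul ((φ.contDiffAt _).inv (hφ x hx))
    · refine (contDiffAt_const (c := (0 : ℂ))).congr_of_eventuallyEq ?_
      filter_upwards [hK.isClosed.isOpen_compl.mem_nhds hx] with y hy
      rw [hθ y hy, zero_div]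
  refine ⟨hsupp.toSchwartzMap hsmooth, SchwartzMap.ext fun x => ?_, fun x hx => ?_⟩
  · change θ x / φ x * φ x = θ x
    by_cases hx : x ∈ K
    · exact div_mul_cancel₀ _ (hφ x hx)
    · rw [hθ x hx, zero_div, zero_mul]
  · change θ x / φ x = 0
    rw [hx, zero_div]

lemma exists_schwartz_cutoff [HasContDiffBump E] [FiniteDimensional ℝ E] {r s : ℝ} (hr : 0 < r)
    (hrs : r < s) :
    ∃ χ : 𝓢(E, ℂ), (∀ x, ‖x‖ ≤ r → χ x = 1) ∧ ∀ x, s ≤ ‖x‖ → χ x = 0 := by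
  let b : ContDiffBump (0 : E) := ⟨r, s, hr, hrs⟩
  have hsupp : HasCompactSupport fun x => (b x : ℂ) :=
    b.hasCompactSupport.comp_left (g := fun t : ℝ => (t : ℂ)) Complex.ofReal_zero
  refine ⟨hsupp.toSchwartzMap (Complex.ofRealCLM.contDiff.comp b.contDiff), fun x hx => ?_,
    fun x hx => ?_⟩
  · change (b x : ℂ) = 1
    rw [b.one_of_mem_closedBall (mem_closedBall_zero_iff.2 hx), Complex.ofReal_one]
  · change (b x : ℂ) = 0
    rw [b.zero_of_le_dist ((dist_zero_right x).symm ▸ hx), Complex.ofReal_zero]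

lemma norm_halfUnit_smul (x : E) : ‖(halfUnit : ℝ) • x‖ = ‖x‖ / 2 := by
  change ‖(2⁻¹ : ℝ) • x‖ = ‖x‖ / 2
  rw [norm_smul, Real.norm_of_nonneg (by norm_num), inv_mul_eq_div]

lemma exists_calderon_resolution [HasContDiffBump E] [FiniteDimensional ℝ E]
    {φ₀ φ₁ : 𝓢(E, ℂ)} {ε k : ℝ} (hε : 0 < ε) (hk : 1 < k)
    (hφ₀ : ∀ x, ‖x‖ ≤ k * ε → φ₀ x ≠ 0)
    (hφ₁ : ∀ x, ε ≤ ‖x‖ → ‖x‖ ≤ 2 * k * ε → φ₁ x ≠ 0) :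
    ∃ χ lam₀ lam₁ : 𝓢(E, ℂ), χ 0 = 1 ∧ schwartzMul lam₀ φ₀ = χ ∧
      schwartzMul lam₁ φ₁ = dilate halfUnit χ - χ ∧ lam₁ =ᶠ[𝓝 0] 0 := by
  obtain ⟨χ, hχ1, hχ0⟩ := exists_schwartz_cutoff (E := E) hε (lt_mul_of_one_lt_left hε hk)
  obtain ⟨lam₀, hlam₀, -⟩ := exists_schwartzMul_eq (isCompact_closedBall (0 : E) (k * ε))
    (θ := χ) (φ := φ₀) (fun x hx => hχ0 x (not_le.1 fun h => hx (mem_closedBall_zero_iff.2 h)).le)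
    (fun x hx => hφ₀ x (by simpa using hx))
  have hinner : ∀ x, ‖x‖ ≤ ε → (dilate halfUnit χ - χ) x = 0 := fun x hx => by
    rw [_root_.sub_apply, dilate_apply, hχ1 x hx, hχ1 _ (by
      rw [norm_halfUnit_smul]; linarith [norm_nonneg x]), sub_self]
  have houter : ∀ x, 2 * k * ε ≤ ‖x‖ → (dilate halfUnit χ - χ) x = 0 := fun x hx => by
    have hk0 : 0 < k * ε := mul_pos (zero_lt_one.trans hk) hε
    rw [_root_.sub_apply, dilate_apply, hχ0 x (by linarith), hχ0 _ (by
      rw [norm_halfUnit_smul]; linarith), sub_self]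
  obtain ⟨lam₁, hlam₁, hzero⟩ := exists_schwartzMul_eq
    ((isCompact_closedBall (0 : E) (2 * k * ε)).diff (Metric.isOpen_ball (x := 0) (ε := ε)))
    (θ := dilate halfUnit χ - χ) (φ := φ₁)
    (fun x hx => (lt_or_ge ‖x‖ ε).elim (fun h => hinner x h.le) fun h =>
      houter x (not_lt.1 fun h' => hx (by simpa using ⟨h'.le, h⟩)))
    (fun x hx => by
      obtain ⟨h, h'⟩ : ‖x‖ ≤ 2 * k * ε ∧ ε ≤ ‖x‖ := by simpa using hx
      exact hφ₁ x h' h)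
  refine ⟨χ, lam₀, lam₁, hχ1 0 (by simpa using hε.le), hlam₀, hlam₁, ?_⟩
  filter_upwards [Metric.closedBall_mem_nhds (0 : E) hε] with x hx
  exact hzero x (hinner x (mem_closedBall_zero_iff.1 hx))

lemma sum_schwartzMul_dyadicSystem {χ lam₀ lam₁ φ₀ φ₁ : 𝓢(E, ℂ)}
    (h₀ : schwartzMul lam₀ φ₀ = χ) (h₁ : schwartzMul lam₁ φ₁ = dilate halfUnit χ - χ) (J : ℕ) :
    ∑ κ ∈ Finset.range (J + 1),
      schwartzMul (dyadicSystem lam₀ lam₁ κ) (dyadicSystem φ₀ φ₁ κ) = dilate (halfUnit ^ J) χ := by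
  induction J with
  | zero =>
    rw [zero_add, Finset.sum_range_one, pow_zero]
    exact h₀.trans (SchwartzMap.ext fun x => by simp)
  | succ J ih =>
    have hstep : dilate (halfUnit ^ J) (dilate halfUnit χ) = dilate (halfUnit ^ (J + 1)) χ :=
      SchwartzMap.ext fun x => by simp [pow_succ', mul_smul]
    rw [Finset.sum_range_succ, ih, dyadicSystem, dyadicSystem, ← dilate_schwartzMul, h₁, map_sub,
      hstep, add_sub_cancel]

lemma tendsto_sum_schwartzMul_dyadicSystem {χ lam₀ lam₁ φ₀ φ₁ : 𝓢(E, ℂ)} (hχ : χ 0 = 1)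
    (h₀ : schwartzMul lam₀ φ₀ = χ) (h₁ : schwartzMul lam₁ φ₁ = dilate halfUnit χ - χ)
    (ψ : 𝓢(E, ℂ)) :
    Tendsto (fun J => ∑ κ ∈ Finset.range J,
      schwartzMul (schwartzMul ψ (dyadicSystem lam₀ lam₁ κ)) (dyadicSystem φ₀ φ₁ κ))
      atTop (𝓝 ψ) := by
  rw [← tendsto_add_atTop_iff_nat 1]
  have hpow : Tendsto (fun J : ℕ => ((halfUnit ^ J : ℝˣ) : ℝ)) atTop (𝓝 0) := by
    simp only [coe_halfUnit_pow]
    exact tendsto_pow_atTop_nhds_zero_of_lt_one (by norm_num) (by norm_num)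
  refine (tendsto_schwartzMul_dilate hpow hχ ψ).congr fun J => ?_
  rw [← sum_schwartzMul_dyadicSystem h₀ h₁ J]
  ext x
  simp only [schwartzMul_apply, _root_.sum_apply, Finset.sum_mul]
  exact Finset.sum_congr rfl fun κ _ => by ring

end CalderonResolution

section PeetreDomination

/-- The continuous functional `g ↦ (g ∗ f)(y)` on Schwartz space. -/
def convEval (f : TemperedDist n) (y : Rn n) : 𝓢(Rn n, ℂ) →L[ℂ] ℂ :=
  f.comp (SchwartzMap.compCLMOfAntilipschitz (𝕜 := ℂ) (K := 1)
    (hasTemperateGrowth_reflectTranslate y)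
    (Isometry.of_dist_eq (fun z z' => dist_sub_left y z z')).antilipschitz)

lemma distConv_sconv (f : TemperedDist n) (A g : 𝓢(Rn n, ℂ)) (y : Rn n) :
    distConv (sconv A g) f y = ∫ z, A z * distConv g f (y - z) := by
  refine (clm_sconv (convEval f y) A g).trans (integral_congr_ae (.of_forall fun z => ?_))
  have hcomm : reflectTranslate y (SchwartzMap.compSubConstCLM ℂ z g) =
      reflectTranslate (y - z) g :=
    SchwartzMap.ext fun x => congrArg g (sub_right_comm y x z)
  exact congrArg (A z * f ·) hcomm

lemma enorm_le_peetreMax {a : ℝ} (ha : 0 ≤ a) (κ : ℕ) (F : Rn n → ℂ) (x y z : Rn n) :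
    ‖F (y - z)‖ₑ ≤ peetreWeight a (2 ^ κ) z *
      (2 ^ a * peetreWeight a (2 ^ κ) (y - x) * peetreMax a κ F x) := by
  have hsup : ‖F (y - z)‖ₑ / peetreWeight a (2 ^ κ) (y - z - x) ≤ peetreMax a κ F x :=
    le_iSup (fun y' => ‖F y'‖ₑ / peetreWeight a (2 ^ κ) (y' - x)) (y - z)
  rw [ENNReal.div_le_iff (peetreWeight_ne_zero (by positivity) _) ENNReal.ofReal_ne_top,
    sub_right_comm] at hsup
  calc ‖F (y - z)‖ₑ ≤ peetreMax a κ F x * peetreWeight a (2 ^ κ) (y - x - z) := hsup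
    _ ≤ peetreMax a κ F x *
        (2 ^ a * peetreWeight a (2 ^ κ) (y - x) * peetreWeight a (2 ^ κ) z) := by
      gcongr
      exact peetreWeight_sub_le ha (by positivity) _ _
    _ = _ := by ring

lemma enorm_distConv_fourier_schwartzMul_le {a : ℝ} (ha : 0 ≤ a) (κ : ℕ) (f : TemperedDist n)
    (g h : 𝓢(Rn n, ℂ)) (x y : Rn n) :
    ‖distConv (𝓕 (schwartzMul g h)) f y‖ₑ ≤ kernelNorm a (2 ^ κ) g *
      (2 ^ a * peetreWeight a (2 ^ κ) (y - x) * peetreMax a κ (distConv (𝓕 h) f) x) := by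
  have hmeas : Measurable fun z => ‖𝓕 g z‖ₑ * peetreWeight a (2 ^ κ) z := by
    have := (𝓕 g).continuous.measurable
    unfold peetreWeight
    fun_prop
  rw [fourier_schwartzMul, distConv_sconv, kernelNorm, ← lintegral_mul_const _ hmeas]
  refine (enorm_integral_le_lintegral_enorm _).trans (lintegral_mono fun z => ?_)
  rw [enorm_mul, mul_assoc]
  exact mul_le_mul_right (enorm_le_peetreMax ha κ _ x y z) _

lemma enorm_distConv_fourier_le_tsum {a : ℝ} (ha : 0 ≤ a) (f : TemperedDist n)
    {ψ : 𝓢(Rn n, ℂ)} {lams phis : ℕ → 𝓢(Rn n, ℂ)}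
    (hres : Tendsto (fun J => ∑ κ ∈ Finset.range J,
      schwartzMul (schwartzMul ψ (lams κ)) (phis κ)) atTop (𝓝 ψ)) (x y : Rn n) :
    ‖distConv (𝓕 ψ) f y‖ₑ ≤ ∑' κ, kernelNorm a (2 ^ κ) (schwartzMul ψ (lams κ)) *
      (2 ^ a * peetreWeight a (2 ^ κ) (y - x) * peetreMax a κ (distConv (𝓕 (phis κ)) f) x) := by
  let L : 𝓢(Rn n, ℂ) →L[ℂ] ℂ := (convEval f y).comp (FourierTransform.fourierCLM ℂ 𝓢(Rn n, ℂ))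
  have hlim : Tendsto _ atTop (𝓝 ‖L ψ‖ₑ) := ((L.continuous.tendsto ψ).comp hres).enorm
  refine le_of_tendsto hlim (.of_forall fun J => ?_)
  simp only [Function.comp_apply, map_sum]
  calc _ ≤ ∑ κ ∈ Finset.range J, ‖L (schwartzMul (schwartzMul ψ (lams κ)) (phis κ))‖ₑ :=
        enorm_sum_le _ _
    _ ≤ _ := Finset.sum_le_sum fun κ _ =>
        enorm_distConv_fourier_schwartzMul_le ha κ f (schwartzMul ψ (lams κ)) (phis κ) x y
    _ ≤ _ := ENNReal.sum_le_tsum _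

lemma mul_peetreMax_le_tsum {a : ℝ} (ha : 0 ≤ a) (f : TemperedDist n) {ψ : 𝓢(Rn n, ℂ)}
    {lams phis : ℕ → 𝓢(Rn n, ℂ)}
    (hres : Tendsto (fun J => ∑ κ ∈ Finset.range J,
      schwartzMul (schwartzMul ψ (lams κ)) (phis κ)) atTop (𝓝 ψ))
    {ν : ℕ} {m : ℝ≥0∞} {c : ℕ → ℝ≥0∞}
    (hc : ∀ κ (z : Rn n), m * kernelNorm a (2 ^ κ) (schwartzMul ψ (lams κ)) *
      peetreWeight a (2 ^ κ) z ≤ c κ * peetreWeight a (2 ^ ν) z) (x : Rn n) :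
    m * peetreMax a ν (distConv (𝓕 ψ) f) x ≤
      2 ^ a * ∑' κ, c κ * peetreMax a κ (distConv (𝓕 (phis κ)) f) x := by
  rw [peetreMax, ENNReal.mul_iSup]
  refine iSup_le fun y => ?_
  rw [← mul_div_assoc]
  refine ENNReal.div_le_of_le_mul ?_
  change m * ‖distConv (𝓕 ψ) f y‖ₑ ≤ _ * peetreWeight a (2 ^ ν) (y - x)
  rw [← ENNReal.tsum_mul_left, ← ENNReal.tsum_mul_right]
  refine (mul_le_mul_right (enorm_distConv_fourier_le_tsum ha f hres x y) m).trans ?_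
  rw [← ENNReal.tsum_mul_left]
  refine ENNReal.tsum_le_tsum fun κ => ?_
  set P := peetreMax a κ (distConv (𝓕 (phis κ)) f) x
  calc m * (kernelNorm a (2 ^ κ) (schwartzMul ψ (lams κ)) *
        (2 ^ a * peetreWeight a (2 ^ κ) (y - x) * P))
      = 2 ^ a * (m * kernelNorm a (2 ^ κ) (schwartzMul ψ (lams κ)) *
          peetreWeight a (2 ^ κ) (y - x) * P) := by ring
    _ ≤ 2 ^ a * (c κ * peetreWeight a (2 ^ ν) (y - x) * P) := by
      gcongr 2 ^ a * (?_ * P); exact hc κ (y - x)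
    _ = 2 ^ a * (c κ * P) * peetreWeight a (2 ^ ν) (y - x) := by ring

end PeetreDomination

section OffDiagonalDecay

lemma le_pow_mul_of_forall_succ_le {v : ℕ → ℝ≥0∞} {B : ℝ≥0∞} (h : ∀ j, v (j + 1) ≤ B * v j)
    (j d : ℕ) : v (j + d) ≤ B ^ d * v j := by
  induction d with
  | zero => simp
  | succ d ih =>
    calc v (j + (d + 1)) ≤ B * v (j + d) := h (j + d)
      _ ≤ B * (B ^ d * v j) := by gcongr
      _ = B ^ (d + 1) * v j := by ring

lemma le_pow_mul_add_of_forall_le_succ {v : ℕ → ℝ≥0∞} {A : ℝ≥0∞} (h : ∀ j, v j ≤ A * v (j + 1))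
    (j d : ℕ) : v j ≤ A ^ d * v (j + d) := by
  induction d with
  | zero => simp
  | succ d ih =>
    calc v j ≤ A ^ d * v (j + d) := ih
      _ ≤ A ^ d * (A * v (j + d + 1)) := by gcongr; exact h (j + d)
      _ = A ^ (d + 1) * v (j + (d + 1)) := by rw [add_assoc]; ring

lemma exists_mul_inv_two_pow_le {K r : ℝ≥0∞} (hK : K ≠ ∞) (hr : 0 < r) :
    ∃ N : ℕ, K * 2⁻¹ ^ N ≤ r := by
  have hlim : Tendsto (fun N : ℕ => K * 2⁻¹ ^ N) atTop (𝓝 (K * 0)) :=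
    ENNReal.Tendsto.const_mul
      (ENNReal.tendsto_pow_atTop_nhds_zero_of_lt_one (by simp)) (.inr hK)
  rw [mul_zero] at hlim
  exact ((hlim.eventually_lt_const hr).mono fun _ h => h.le).exists

lemma iteratedFDeriv_eq_zero_of_eventuallyEq {E F : Type*} [NormedAddCommGroup E]
    [NormedSpace ℝ E] [NormedAddCommGroup F] [NormedSpace ℝ F] {g : E → F} {x : E}
    (h : g =ᶠ[𝓝 x] 0) (i : ℕ) : iteratedFDeriv ℝ i g x = 0 :=
  (h.iteratedFDeriv ℝ i).eq_of_nhds.trans (congrFun iteratedFDeriv_fun_zero x)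

variable {E : Type*} [NormedAddCommGroup E] [InnerProductSpace ℝ E] [FiniteDimensional ℝ E]
  [MeasurableSpace E] [BorelSpace E]

lemma exists_mul_kernelNorm_mul_peetreWeight_le {a : ℝ} (ha : 0 ≤ a) {A B r : ℝ≥0∞} (hA : A ≠ ∞)
    {R : ℕ} (hBr : B * 2⁻¹ ^ R ≤ r) (hr : 0 < r) {ψ₁ lam₁ : 𝓢(E, ℂ)}
    (hψ₁ : ∀ i < R, iteratedFDeriv ℝ i ψ₁ 0 = 0) (hlam₁ : lam₁ =ᶠ[𝓝 0] 0) (ψ₀ lam₀ : 𝓢(E, ℂ)) :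
    ∃ C : ℝ≥0∞, C ≠ ∞ ∧ ∀ v : ℕ → ℝ≥0∞, (∀ j, v (j + 1) ≤ B * v j) →
      (∀ j, v j ≤ A * v (j + 1)) → ∀ (ν κ : ℕ) (z : E),
      v ν * kernelNorm a (2 ^ κ) (schwartzMul (dyadicSystem ψ₀ ψ₁ ν) (dyadicSystem lam₀ lam₁ κ)) *
        peetreWeight a (2 ^ κ) z ≤
      C * (r ^ ((ν : ℤ) - κ).natAbs * v κ) * peetreWeight a (2 ^ ν) z := by
  obtain ⟨N, hN⟩ := exists_mul_inv_two_pow_le (K := A * (2 ^ a * 2 ^ a)) (by finiteness) hr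
  obtain ⟨C₁, hC₁, hψ⟩ := exists_kernelNorm_dyadicSystem_le ha hψ₁ ψ₀ lam₀ lam₁
  obtain ⟨C₂, hC₂, hlam⟩ := exists_kernelNorm_dyadicSystem_le ha (R := N)
    (fun i _ => iteratedFDeriv_eq_zero_of_eventuallyEq hlam₁ i) lam₀ ψ₀ ψ₁
  refine ⟨max C₁ C₂, (max_lt hC₁.lt_top hC₂.lt_top).ne, fun v hup hdown ν κ z => ?_⟩
  rcases le_total κ ν with h | h <;> obtain ⟨d, rfl⟩ := Nat.exists_eq_add_of_le h
  · have hd : (((κ + d : ℕ) : ℤ) - κ).natAbs = d := by omega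
    calc _ ≤ B ^ d * v κ * (C₁ * (2⁻¹ ^ R) ^ d) * peetreWeight a (2 ^ (κ + d)) z := by
          gcongr
          · exact le_pow_mul_of_forall_succ_le hup κ d
          · exact hψ κ d
          · exact peetreWeight_mono ha (by positivity) (pow_le_pow_right₀ one_le_two h) z
      _ = C₁ * ((B * 2⁻¹ ^ R) ^ d * v κ) * peetreWeight a (2 ^ (κ + d)) z := by ring
      _ ≤ _ := by rw [hd]; gcongr; exact le_max_left C₁ C₂
  · have hd : ((ν : ℤ) - (ν + d : ℕ)).natAbs = d := by omega
    rw [schwartzMul_comm]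
    calc _ ≤ A ^ d * v (ν + d) * ((2 ^ a) ^ d * (C₂ * (2⁻¹ ^ N) ^ d)) *
            ((2 ^ a) ^ d * peetreWeight a (2 ^ ν) z) := by
          gcongr
          · exact le_pow_mul_add_of_forall_le_succ hdown ν d
          · exact (kernelNorm_two_pow_add_le ha ν d _).trans (mul_le_mul_right (hlam ν d) _)
          · exact peetreWeight_two_pow_add_le ha ν d z
      _ = C₂ * ((A * (2 ^ a * 2 ^ a) * 2⁻¹ ^ N) ^ d * v (ν + d)) * peetreWeight a (2 ^ ν) z := by
          ring
      _ ≤ _ := by rw [hd]; gcongr; exact le_max_right C₁ C₂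

end OffDiagonalDecay

section GeometricConvolution

lemma tsum_pow_natAbs_ne_top {r : ℝ≥0∞} (hr : r < 1) : ∑' m : ℤ, r ^ m.natAbs ≠ ∞ := by
  have hgeom : ∑' j : ℕ, r ^ j ≠ ∞ := by
    rw [ENNReal.tsum_geometric, Ne, ENNReal.inv_eq_top, tsub_eq_zero_iff_le, not_le]
    exact hr
  have hneg : ∀ j : ℕ, (-((j : ℤ) + 1)).natAbs = j + 1 := fun j => by omega
  rw [tsum_of_nat_of_neg_add_one ENNReal.summable ENNReal.summable]
  simp only [hneg, Int.natAbs_natCast, pow_succ, ENNReal.tsum_mul_right]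
  finiteness

lemma one_le_tsum_pow_natAbs (r : ℝ≥0∞) : 1 ≤ ∑' m : ℤ, r ^ m.natAbs := by
  simpa using ENNReal.le_tsum (f := fun m : ℤ => r ^ m.natAbs) 0

lemma tsum_pow_natAbs_sub_left_le (r : ℝ≥0∞) (ν : ℕ) :
    ∑' κ : ℕ, r ^ ((ν : ℤ) - κ).natAbs ≤ ∑' m : ℤ, r ^ m.natAbs :=
  ENNReal.tsum_comp_le_tsum_of_injective (fun _ _ h => by simpa using h) fun m : ℤ => r ^ m.natAbs

lemma tsum_pow_natAbs_sub_right_le (r : ℝ≥0∞) (κ : ℕ) :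
    ∑' ν : ℕ, r ^ ((ν : ℤ) - κ).natAbs ≤ ∑' m : ℤ, r ^ m.natAbs :=
  ENNReal.tsum_comp_le_tsum_of_injective (fun _ _ h => by simpa using h) fun m : ℤ => r ^ m.natAbs

lemma tsum_mul_self_pow_natAbs_mul_le {s X : ℝ≥0∞} {b : ℕ → ℝ≥0∞} {ν : ℕ}
    (hX : ∀ κ : ℕ, s ^ ((ν : ℤ) - κ).natAbs * b κ ≤ X) :
    ∑' κ : ℕ, (s * s) ^ ((ν : ℤ) - κ).natAbs * b κ ≤ (∑' m : ℤ, s ^ m.natAbs) * X := by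
  calc ∑' κ : ℕ, (s * s) ^ ((ν : ℤ) - κ).natAbs * b κ
      ≤ ∑' κ : ℕ, s ^ ((ν : ℤ) - κ).natAbs * X := by
        refine ENNReal.tsum_le_tsum fun κ => ?_
        rw [mul_pow, mul_assoc]
        gcongr
        exact hX κ
    _ ≤ (∑' m : ℤ, s ^ m.natAbs) * X := by
        rw [ENNReal.tsum_mul_right]
        gcongr
        exact tsum_pow_natAbs_sub_left_le s ν

lemma pow_natAbs_mul_le_rpow_tsum {s : ℝ≥0∞} (hs : s ≤ 1) {q₀ q : ℝ} (hq₀ : 0 < q₀) (hq : q₀ ≤ q)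
    (b : ℕ → ℝ≥0∞) (ν κ : ℕ) :
    s ^ ((ν : ℤ) - κ).natAbs * b κ ≤
      (∑' κ : ℕ, (s ^ q₀) ^ ((ν : ℤ) - κ).natAbs * b κ ^ q) ^ (1 / q) := by
  have hq0 : 0 < q := hq₀.trans_le hq
  rw [one_div, ENNReal.le_rpow_inv_iff hq0, ENNReal.mul_rpow_of_nonneg _ _ hq0.le,
    ← ENNReal.rpow_natCast_mul, mul_comm (_ : ℝ) q, ENNReal.rpow_mul_natCast]
  calc _ ≤ (s ^ q₀) ^ ((ν : ℤ) - κ).natAbs * b κ ^ q := by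
        gcongr ?_ ^ _ * _
        exact ENNReal.rpow_le_rpow_of_exponent_ge hs hq
    _ ≤ _ := ENNReal.le_tsum (f := fun κ : ℕ => (s ^ q₀) ^ ((ν : ℤ) - κ).natAbs * b κ ^ q) κ

lemma tsum_tsum_pow_natAbs_mul_le (r : ℝ≥0∞) (b : ℕ → ℝ≥0∞) :
    ∑' ν : ℕ, ∑' κ : ℕ, r ^ ((ν : ℤ) - κ).natAbs * b κ ≤
      (∑' m : ℤ, r ^ m.natAbs) * ∑' κ, b κ := by
  rw [ENNReal.tsum_comm, ← ENNReal.tsum_mul_left]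
  refine ENNReal.tsum_le_tsum fun κ => ?_
  rw [ENNReal.tsum_mul_right]
  gcongr
  exact tsum_pow_natAbs_sub_right_le r κ

lemma lqNorm_top_le_of_le_geometric_conv {s D : ℝ≥0∞} (hs : s ≤ 1) {a b : ℕ → ℝ≥0∞}
    (hab : ∀ ν, a ν ≤ D * ∑' κ : ℕ, (s * s) ^ ((ν : ℤ) - κ).natAbs * b κ) :
    lqNorm ∞ a ≤ D * (∑' m : ℤ, s ^ m.natAbs) * lqNorm ∞ b := by
  simp only [lqNorm, if_true]
  refine iSup_le fun ν => (hab ν).trans ?_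
  rw [mul_assoc]
  gcongr
  exact tsum_mul_self_pow_natAbs_mul_le fun κ =>
    (mul_le_of_le_one_left' (pow_le_one₀ zero_le hs)).trans (le_iSup b κ)

lemma lqNorm_le_of_le_geometric_conv {s D : ℝ≥0∞} (hs : s ≤ 1) {q₀ : ℝ} (hq₀ : 0 < q₀)
    {q : ℝ≥0∞} (hq : ENNReal.ofReal q₀ ≤ q) (hq_top : q ≠ ∞) {a b : ℕ → ℝ≥0∞}
    (hab : ∀ ν, a ν ≤ D * ∑' κ : ℕ, (s * s) ^ ((ν : ℤ) - κ).natAbs * b κ) :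
    lqNorm q a ≤ D * (∑' m : ℤ, s ^ m.natAbs) * (∑' m : ℤ, (s ^ q₀) ^ m.natAbs) ^ (1 / q₀) *
      lqNorm q b := by
  simp only [lqNorm, if_neg hq_top]
  set r := q.toReal
  have hqr : q₀ ≤ r := (ENNReal.ofReal_le_iff_le_toReal hq_top).1 hq
  have hr : 0 < r := hq₀.trans_le hqr
  set S := ∑' m : ℤ, s ^ m.natAbs
  set T := ∑' m : ℤ, (s ^ q₀) ^ m.natAbs
  have hpow : ∀ ν : ℕ,
      a ν ^ r ≤ (D * S) ^ r * ∑' κ : ℕ, (s ^ q₀) ^ ((ν : ℤ) - κ).natAbs * b κ ^ r := fun ν => by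
    rw [← ENNReal.le_rpow_inv_iff hr, ENNReal.mul_rpow_of_nonneg _ _ (by positivity),
      ENNReal.rpow_rpow_inv hr.ne', ← one_div, mul_assoc]
    refine (hab ν).trans (mul_le_mul_right ?_ D)
    exact tsum_mul_self_pow_natAbs_mul_le (pow_natAbs_mul_le_rpow_tsum hs hq₀ hqr b ν)
  have hsum : ∑' ν, a ν ^ r ≤ (D * S) ^ r * (T * ∑' κ, b κ ^ r) := by
    refine (ENNReal.tsum_le_tsum hpow).trans ?_
    rw [ENNReal.tsum_mul_left]
    gcongr
    exact tsum_tsum_pow_natAbs_mul_le _ _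
  calc (∑' ν, a ν ^ r) ^ (1 / r) ≤ ((D * S) ^ r * (T * ∑' κ, b κ ^ r)) ^ (1 / r) := by gcongr
    _ = D * S * T ^ (1 / r) * (∑' κ, b κ ^ r) ^ (1 / r) := by
        have hr' := inv_nonneg.2 hr.le
        rw [one_div, ENNReal.mul_rpow_of_nonneg _ _ hr', ENNReal.mul_rpow_of_nonneg _ _ hr',
          ENNReal.rpow_rpow_inv hr.ne', mul_assoc (D * S)]
    _ ≤ D * S * T ^ (1 / q₀) * (∑' κ, b κ ^ r) ^ (1 / r) := by
        gcongr
        exact one_le_tsum_pow_natAbs _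

lemma exists_lqNorm_geometric_conv_le {r D : ℝ≥0∞} (hr : r < 1) (hD : D ≠ ∞) {q₀ : ℝ}
    (hq₀ : 0 < q₀) :
    ∃ C : ℝ≥0∞, C ≠ ∞ ∧ ∀ q, ENNReal.ofReal q₀ ≤ q → ∀ a b : ℕ → ℝ≥0∞,
      (∀ ν, a ν ≤ D * ∑' κ : ℕ, r ^ ((ν : ℤ) - κ).natAbs * b κ) →
        lqNorm q a ≤ C * lqNorm q b := by
  obtain ⟨s, hs, rfl⟩ : ∃ s < 1, r = s * s :=
    ⟨r ^ (2⁻¹ : ℝ), ENNReal.rpow_lt_one hr (by norm_num), by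
      rw [← ENNReal.rpow_add_of_nonneg _ _ (by norm_num) (by norm_num)]; norm_num⟩
  have hS := tsum_pow_natAbs_ne_top hs
  have hT := tsum_pow_natAbs_ne_top (ENNReal.rpow_lt_one hs hq₀)
  refine ⟨D * (∑' m : ℤ, s ^ m.natAbs) * (∑' m : ℤ, (s ^ q₀) ^ m.natAbs) ^ (1 / q₀),
    ENNReal.mul_ne_top (ENNReal.mul_ne_top hD hS)
      (ENNReal.rpow_ne_top_of_nonneg (by positivity) hT), fun q hq a b hab => ?_⟩
  rcases eq_or_ne q ∞ with rfl | hq_top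
  · refine (lqNorm_top_le_of_le_geometric_conv hs.le hab).trans (mul_le_mul_left ?_ _)
    exact le_mul_of_one_le_right' (ENNReal.one_le_rpow (one_le_tsum_pow_natAbs _) (by positivity))
  · exact lqNorm_le_of_le_geometric_conv hs.le hq₀ hq hq_top hab

end GeometricConvolution

section NormMonotonicity

lemma phiVE_mono (t : ℝ≥0∞) : Monotone (phiVE t) := by
  intro s s' h
  unfold phiVE
  split_ifs with _ hs hs' hs'
  · exact le_rfl
  · exact zero_le
  · exact absurd (h.trans hs') hs
  · exact le_rfl
  · gcongr

lemma vLpNorm_le_mul (p : Rn n → ℝ≥0∞) {g h : Rn n → ℝ≥0∞} {c : ℝ≥0∞} (hc0 : c ≠ 0) (hc : c ≠ ∞)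
    (hgh : ∀ᵐ x, g x ≤ c * h x) : vLpNorm p g ≤ c * vLpNorm p h := by
  rw [← ENNReal.div_le_iff' hc0 hc]
  refine le_sInf fun lam hlam => ?_
  rw [ENNReal.div_le_iff' hc0 hc]
  refine sInf_le (le_trans (lintegral_mono_ae ?_) hlam)
  filter_upwards [hgh] with x hx
  refine phiVE_mono _ ?_
  rw [← ENNReal.mul_div_mul_left (h x) lam hc0 hc]
  gcongr

lemma morreyNorm_le_mul (p u : Rn n → ℝ≥0∞) {g h : Rn n → ℝ≥0∞} {c : ℝ≥0∞} (hc0 : c ≠ 0)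
    (hc : c ≠ ∞) (hgh : ∀ᵐ x, g x ≤ c * h x) : morreyNorm p u g ≤ c * morreyNorm p u h := by
  simp only [morreyNorm, ENNReal.mul_iSup]
  refine iSup_mono fun x => iSup_mono fun r => iSup_mono fun _ => ?_
  have hball : ∀ᵐ y, (Metric.ball x r).indicator g y ≤ c * (Metric.ball x r).indicator h y := by
    filter_upwards [hgh] with y hy
    by_cases hyb : y ∈ Metric.ball x r <;> simp [hyb, hy]
  rw [mul_left_comm]
  gcongr
  exact vLpNorm_le_mul p hc0 hc hball

lemma exists_ae_ofReal_le {q : Rn n → ℝ≥0∞} (hq : 0 < essInf q volume) :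
    ∃ q₀ : ℝ, 0 < q₀ ∧ ∀ᵐ x, ENNReal.ofReal q₀ ≤ q x := by
  have hmin : min (essInf q volume) 1 ≠ ∞ := (min_lt_of_right_lt one_lt_top).ne
  refine ⟨(min (essInf q volume) 1).toReal, ENNReal.toReal_pos (lt_min hq one_pos).ne' hmin, ?_⟩
  filter_upwards [ae_essInf_le (f := q) (μ := volume)] with x hx
  rw [ENNReal.ofReal_toReal hmin]
  exact (min_le_left _ _).trans hx

end NormMonotonicity

section PeetreComparison

lemma eq_dyadicSystem {E : Type*} [NormedAddCommGroup E] [NormedSpace ℝ E] {g : ℕ → 𝓢(E, ℂ)}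
    {g₀ g₁ : 𝓢(E, ℂ)} (h0 : g 0 = g₀) (h1 : g 1 = g₁)
    (h : ∀ j : ℕ, 2 ≤ j → ∀ x, g j x = g₁ ((2 : ℝ) ^ (-(j : ℝ) + 1) • x)) :
    g = dyadicSystem g₀ g₁ := by
  funext j
  match j with
  | 0 => exact h0
  | 1 => exact h1.trans (SchwartzMap.ext fun x => by simp [dyadicSystem])
  | j + 2 =>
    have hexp : (2 : ℝ) ^ (-((j + 2 : ℕ) : ℝ) + 1) = 2⁻¹ ^ (j + 1) := by
      rw [inv_pow, ← Real.rpow_natCast, ← Real.rpow_neg two_pos.le]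
      push_cast
      ring_nf
    ext x
    rw [h (j + 2) (Nat.le_add_left 2 j), dyadicSystem, dilate_apply, coe_halfUnit_pow, hexp]

lemma ofReal_le_two_rpow_mul {b s t : ℝ} (h : s ≤ 2 ^ b * t) :
    ENNReal.ofReal s ≤ 2 ^ b * ENNReal.ofReal t := by
  rw [← ENNReal.ofReal_ofNat 2, ENNReal.ofReal_rpow_of_pos two_pos,
    ← ENNReal.ofReal_mul (by positivity)]
  exact ENNReal.ofReal_le_ofReal h

lemma AdmissibleWeights.ofReal_succ_le {al al1 al2 C : ℝ} {w : ℕ → Rn n → ℝ}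
    (hw : AdmissibleWeights al al1 al2 C w) (j : ℕ) (x : Rn n) :
    ENNReal.ofReal (w (j + 1) x) ≤ 2 ^ al2 * ENNReal.ofReal (w j x) :=
  ofReal_le_two_rpow_mul (hw.2.2 j x).2

lemma AdmissibleWeights.ofReal_le_succ {al al1 al2 C : ℝ} {w : ℕ → Rn n → ℝ}
    (hw : AdmissibleWeights al al1 al2 C w) (j : ℕ) (x : Rn n) :
    ENNReal.ofReal (w j x) ≤ 2 ^ (-al1) * ENNReal.ofReal (w (j + 1) x) := by
  refine ofReal_le_two_rpow_mul ?_
  rw [Real.rpow_neg two_pos.le, le_inv_mul_iff₀ (by positivity)]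
  exact (hw.2.2 j x).1

lemma two_rpow_lt_two_pow {b : ℝ} {R : ℕ} (h : b < R) : (2 : ℝ≥0∞) ^ b < 2 ^ R := by
  rw [← ENNReal.rpow_natCast]
  exact ENNReal.rpow_lt_rpow_of_exponent_lt one_lt_two ofNat_ne_top h

lemma exists_mul_peetreMax_dyadicSystem_le {a : ℝ} (ha : 0 ≤ a) {A B : ℝ≥0∞} (hA : A ≠ ∞)
    {R : ℕ} (hB : B < 2 ^ R) (ψ₀ : 𝓢(Rn n, ℂ)) {ψ₁ : 𝓢(Rn n, ℂ)}
    (hψ₁ : ∀ m < R, iteratedFDeriv ℝ m ψ₁ 0 = 0) {φ₀ φ₁ : 𝓢(Rn n, ℂ)} {ε k : ℝ} (hε : 0 < ε)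
    (hk : 1 < k) (hφ₀ : ∀ x, ‖x‖ ≤ k * ε → φ₀ x ≠ 0)
    (hφ₁ : ∀ x, ε ≤ ‖x‖ → ‖x‖ ≤ 2 * k * ε → φ₁ x ≠ 0) :
    ∃ r < 1, ∃ D : ℝ≥0∞, D ≠ ∞ ∧ ∀ v : ℕ → ℝ≥0∞, (∀ j, v (j + 1) ≤ B * v j) →
      (∀ j, v j ≤ A * v (j + 1)) → ∀ (f : TemperedDist n) (x : Rn n) (ν : ℕ),
      v ν * peetreMax a ν (distConv (𝓕 (dyadicSystem ψ₀ ψ₁ ν)) f) x ≤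
        D * ∑' κ : ℕ, r ^ ((ν : ℤ) - κ).natAbs *
          (v κ * peetreMax a κ (distConv (𝓕 (dyadicSystem φ₀ φ₁ κ)) f) x) := by
  have hlt : B * 2⁻¹ ^ R < 1 := by
    rw [← ENNReal.inv_pow]
    exact ENNReal.div_lt_of_lt_mul (by rwa [one_mul])
  obtain ⟨r, hBr, hr⟩ := exists_between hlt
  obtain ⟨χ, lam₀, lam₁, hχ, hlam₀, hlam₁, hvan⟩ := exists_calderon_resolution hε hk hφ₀ hφ₁
  obtain ⟨C, hC, hdecay⟩ := exists_mul_kernelNorm_mul_peetreWeight_le ha hA hBr.le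
    (bot_le.trans_lt hBr) hψ₁ hvan ψ₀ lam₀
  refine ⟨r, hr, 2 ^ a * C, by finiteness, fun v hup hdown f x ν => ?_⟩
  refine (mul_peetreMax_le_tsum ha f (tendsto_sum_schwartzMul_dyadicSystem hχ hlam₀ hlam₁ _)
    (fun κ z => hdecay v hup hdown ν κ z) x).trans_eq ?_
  simp only [mul_assoc, ENNReal.tsum_mul_left]

theorem statement13_general {A B : ℝ≥0∞} (hA : A ≠ ∞) {w : ℕ → Rn n → ℝ≥0∞}
    (hup : ∀ j x, w (j + 1) x ≤ B * w j x) (hdown : ∀ j x, w j x ≤ A * w (j + 1) x)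
    (p u : Rn n → ℝ≥0∞) {q : Rn n → ℝ≥0∞} (hq : 0 < essInf q volume) {a : ℝ} (ha : 0 ≤ a)
    {R : ℕ} (hB : B < 2 ^ R) (ψ₀ : 𝓢(Rn n, ℂ)) {ψ₁ : 𝓢(Rn n, ℂ)}
    (hψ₁ : ∀ m < R, iteratedFDeriv ℝ m ψ₁ 0 = 0) {φ₀ φ₁ : 𝓢(Rn n, ℂ)} {ε k : ℝ} (hε : 0 < ε)
    (hk : 1 < k) (hφ₀ : ∀ x, ‖x‖ ≤ k * ε → φ₀ x ≠ 0)
    (hφ₁ : ∀ x, ε ≤ ‖x‖ → ‖x‖ ≤ 2 * k * ε → φ₁ x ≠ 0) :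
    ∃ c : ℝ, 0 < c ∧ ∀ f : TemperedDist n,
      morreySeqNorm p u q (fun j x => w j x *
          peetreMax a j (distConv (𝓕 (dyadicSystem ψ₀ ψ₁ j)) f) x) ≤
        ENNReal.ofReal c * morreySeqNorm p u q (fun j x => w j x *
          peetreMax a j (distConv (𝓕 (dyadicSystem φ₀ φ₁ j)) f) x) := by
  obtain ⟨r, hr, D, hD, hpointwise⟩ :=
    exists_mul_peetreMax_dyadicSystem_le ha hA hB ψ₀ hψ₁ hε hk hφ₀ hφ₁
  obtain ⟨q₀, hq₀, hq_ae⟩ := exists_ae_ofReal_le hq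
  obtain ⟨C, hC, hlq⟩ := exists_lqNorm_geometric_conv_le hr hD hq₀
  have hc : 0 < C.toReal + 1 := by positivity
  have hCc : C ≤ ENNReal.ofReal (C.toReal + 1) :=
    (ENNReal.le_ofReal_iff_toReal_le hC hc.le).2 (le_add_of_nonneg_right zero_le_one)
  refine ⟨C.toReal + 1, hc, fun f => ?_⟩
  refine morreyNorm_le_mul p u (ENNReal.ofReal_pos.2 hc).ne' ENNReal.ofReal_ne_top ?_
  filter_upwards [hq_ae] with x hx
  refine (hlq (q x) hx _ _ (hpointwise (w · x) (hup · x) (hdown · x) f x)).trans ?_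
  gcongr

end PeetreComparison

/-- comparison of Peetre maximal functions built from two different
systems of kernels, in vector-valued variable exponent Morrey spaces. -/
theorem statement13 (n : ℕ) (al al1 al2 C : ℝ) (h12 : al1 ≤ al2) (hal : 0 ≤ al)
    (w : ℕ → Rn n → ℝ) (hw : AdmissibleWeights al al1 al2 C w)
    (p q u : Rn n → ℝ≥0∞) (hp : IsVarExp p) (hq : IsVarExp q) (hu : IsVarExp u)
    (hpu : ∀ x, p x ≤ u x)
    (a : ℝ) (ha : 0 < a) (R : ℕ) (hR : al2 < R)
    (psi0 psi1 phi0 phi1 : SchwartzMap (Rn n) ℂ)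
    (hmom : ∀ m : ℕ, m < R → iteratedFDeriv ℝ m (⇑psi1) 0 = 0)
    (eps k : ℝ) (heps : 0 < eps) (hk1 : 1 < k) (hk2 : k ≤ 2)
    (hphi0 : ∀ x : Rn n, ‖x‖ ≤ k * eps → 0 < ‖phi0 x‖)
    (hphi1 : ∀ x : Rn n, eps ≤ ‖x‖ → ‖x‖ ≤ 2 * k * eps → 0 < ‖phi1 x‖)
    (psis phis : ℕ → SchwartzMap (Rn n) ℂ)
    (hpsis0 : psis 0 = psi0) (hpsis1 : psis 1 = psi1)
    (hpsis : ∀ j : ℕ, 2 ≤ j → ∀ x : Rn n, psis j x = psi1 ((2 : ℝ) ^ (-(j : ℝ) + 1) • x))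
    (hphis0 : phis 0 = phi0) (hphis1 : phis 1 = phi1)
    (hphis : ∀ j : ℕ, 2 ≤ j → ∀ x : Rn n, phis j x = phi1 ((2 : ℝ) ^ (-(j : ℝ) + 1) • x)) :
    ∃ c : ℝ, 0 < c ∧ ∀ f : TemperedDist n,
      morreySeqNorm p u q (fun j x => ENNReal.ofReal (w j x) *
          peetreMax a j (distConv (SchwartzMap.fourierTransformCLM ℂ (psis j)) f) x) ≤
        ENNReal.ofReal c *
          morreySeqNorm p u q (fun j x => ENNReal.ofReal (w j x) *
            peetreMax a j (distConv (SchwartzMap.fourierTransformCLM ℂ (phis j)) f) x) := by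
  obtain rfl : psis = dyadicSystem psi0 psi1 := eq_dyadicSystem hpsis0 hpsis1 hpsis
  obtain rfl : phis = dyadicSystem phi0 phi1 := eq_dyadicSystem hphis0 hphis1 hphis
  exact statement13_general (by finiteness) hw.ofReal_succ_le hw.ofReal_le_succ p u hq.2.2 ha.le
    (two_rpow_lt_two_pow hR) psi0 hmom heps hk1 (fun x hx => norm_pos_iff.1 (hphi0 x hx))
    (fun x hx hx' => norm_pos_iff.1 (hphi1 x hx hx'))

end
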